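/- Let G be a vertex-transitive, planar, 1-ended, locally finite graph. Then there exists r ∈ ℕ such that for every graph H in which every ball of radius r is isomorphic to the ball of radius r in G, there is a covering map from G onto H; moreover this cover can be chosen normal. -/

import Mathlib

open SimpleGraph

/-- A topological embedding of a graph `G` in the plane: vertices are points, edges are
arcs meeting only at common endpoints and avoiding other vertices. -/
structure PlanarEmbedding {V : Type*} (G : SimpleGraph V) where
  vpos : V → ℝ × ℝ
  vinj : Function.Injective vpos
  arc : ∀ ⦃u v : V⦄, G.Adj u v → Set (ℝ × ℝ)
  arc_isArc : ∀ ⦃u v : V⦄ (h : G.Adj u v),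
    ∃ f : Path (vpos u) (vpos v), Function.Injective f ∧ Set.range f = arc h
  arc_symm : ∀ ⦃u v : V⦄ (h : G.Adj u v), arc h.symm = arc h
  arc_inter : ∀ ⦃u v u' v' : V⦄ (h : G.Adj u v) (h' : G.Adj u' v'),
    s(u, v) ≠ s(u', v') → arc h ∩ arc h' ⊆ vpos '' (({u, v} : Set V) ∩ {u', v'})
  arc_vertex : ∀ ⦃u v : V⦄ (h : G.Adj u v) (w : V), vpos w ∈ arc h → w = u ∨ w = v

/-- The point set of the embedded graph. -/
def PlanarEmbedding.image {V : Type*} {G : SimpleGraph V} (emb : PlanarEmbedding G) :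
    Set (ℝ × ℝ) :=
  Set.range emb.vpos ∪ ⋃ (u : V) (v : V) (h : G.Adj u v), emb.arc h

/-- A face of the embedding: a connected component of the complement of the image. -/
def PlanarEmbedding.IsFace {V : Type*} {G : SimpleGraph V} (emb : PlanarEmbedding G)
    (F : Set (ℝ × ℝ)) : Prop :=
  ∃ x ∈ emb.imageᶜ, F = connectedComponentIn emb.imageᶜ x

/-- The boundary of a face: the set of edges whose arcs lie in the closure of the face. -/
def PlanarEmbedding.boundaryEdges {V : Type*} {G : SimpleGraph V} (emb : PlanarEmbedding G)
    (F : Set (ℝ × ℝ)) : Set (Sym2 V) :=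
  {e | ∃ (u v : V) (h : G.Adj u v), e = s(u, v) ∧ emb.arc h ⊆ closure F}

/-- A peripheral cycle: a cycle that is induced (chordless) and non-separating. -/
def IsPeripheral {V : Type*} (G : SimpleGraph V) {v : V} (w : G.Walk v v) : Prop :=
  w.IsCycle ∧ (∀ a ∈ w.support, ∀ b ∈ w.support, G.Adj a b → s(a, b) ∈ w.edges) ∧
    ({x | x ∉ w.support} = (∅ : Set V) ∨ (G.induce {x | x ∉ w.support}).Connected)

/-- A 3-connected graph: more than 3 vertices, and removing any at most 2 vertices leaves
it connected. -/
def ThreeConnected {V : Type*} (G : SimpleGraph V) : Prop :=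
  (3 < Nat.card V ∨ Infinite V) ∧
    ∀ s : Set V, s.Finite → s.ncard ≤ 2 → (G.induce sᶜ).Connected

/-- A locally finite graph has exactly one end. -/
def OneEnded {V : Type*} (G : SimpleGraph V) : Prop :=
  ∀ K : Finset V, ∃! C : G.ComponentCompl (K : Set V), C.supp.Infinite

/-- `c` is a covering map of graphs: it preserves adjacency and restricts to a bijection
from the neighbourhood of each vertex onto the neighbourhood of its image. -/
def IsCover {V W : Type*} (G : SimpleGraph V) (H : SimpleGraph W) (c : V → W) : Prop :=
  (∀ ⦃u v : V⦄, G.Adj u v → H.Adj (c u) (c v)) ∧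
    ∀ v : V, Set.BijOn c (G.neighborSet v) (H.neighborSet (c v))


/-!
`G` is 3-connected, so a planar embedding gives rise to a notion of angle in which the peripheral
cycles bound faces; hence an automorphism fixing a vertex and its neighbours is the identity, and by
vertex-transitivity peripheral cycles have bounded length. By compactness, a local isomorphism of
large radius agrees near its centre with an automorphism. So a germ of a local isomorphism `G → H`
continues uniquely along every edge, and trivially around each peripheral cycle. As `G` has one end,
these cycles generate all closed walks, so there is no monodromy, and a germ extends to a global map
`G → H`. This map is a cover, and rigidity makes it normal.
-/

section Logarithm

variable {X : Type*} [TopologicalSpace X]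

theorem exists_continuous_log [LocallyPathConnectedSpace X] [SimplyConnectedSpace X]
    {g : X → ℂ} (hg : Continuous g) (hg₀ : ∀ x, g x ≠ 0) :
    ∃ f : X → ℂ, Continuous f ∧ ∀ x, Complex.exp (f x) = g x := by
  obtain ⟨x₀⟩ : Nonempty X := inferInstance
  obtain ⟨f, ⟨-, hf⟩, -⟩ := Complex.isCoveringMapOn_exp.existsUnique_continuousMap_lifts
    ⟨g, hg⟩ (Complex.exp_log (hg₀ x₀)) hg₀
  exact ⟨f, f.continuous, congr_fun hf⟩

theorem sub_eq_sub_of_exp_eq [PreconnectedSpace X] {f g : X → ℂ} (hf : Continuous f)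
    (hg : Continuous g) (h : ∀ x, Complex.exp (f x) = Complex.exp (g x)) (a b : X) :
    f a - f b = g a - g b := by
  have hexp : Complex.exp (f a - g a) = 1 := by
    rw [Complex.exp_sub, h a, div_self (Complex.exp_ne_zero _)]
  have hshift : f = fun x => g x + (f a - g a) :=
    Complex.isCoveringMap_exp.eq_of_comp_eq hf (by fun_prop)
      (funext fun x => Subtype.ext (by simp [Complex.exp_add, hexp, h x])) a (by ring)
  rw [congr_fun hshift b]
  ring

open Classical in
/-- The total change from `0` to `1` of a continuous logarithm of the curve `g`, with junk value
`0` if there is no such logarithm. -/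
noncomputable def logChange (g : ℝ → ℂ) : ℂ :=
  if h : ∃ f : ℝ → ℂ, Continuous f ∧ ∀ t, Complex.exp (f t) = g t then
    h.choose 1 - h.choose 0 else 0

theorem logChange_eq {g f : ℝ → ℂ} (hf : Continuous f) (h : ∀ t, Complex.exp (f t) = g t) :
    logChange g = f 1 - f 0 := by
  have hex : ∃ f : ℝ → ℂ, Continuous f ∧ ∀ t, Complex.exp (f t) = g t := ⟨f, hf, h⟩
  rw [logChange, dif_pos hex]
  exact sub_eq_sub_of_exp_eq hex.choose_spec.1 hf
    (fun t => (hex.choose_spec.2 t).trans (h t).symm) 1 0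

theorem exp_logChange {g : ℝ → ℂ} (hg : Continuous g) (hg₀ : ∀ t, g t ≠ 0) :
    Complex.exp (logChange g) = g 1 / g 0 := by
  obtain ⟨f, hf, hfg⟩ := exists_continuous_log hg hg₀
  rw [logChange_eq hf hfg, Complex.exp_sub, hfg, hfg]

/-- Sliding the endpoints of the segment from `β t` to `α s` once around the unit square does not
change its direction in total. -/
theorem logChange_swap {α β : ℝ → ℂ} (hα : Continuous α) (hβ : Continuous β)
    (hαβ : ∀ s t, α s ≠ β t) :
    logChange (fun s => α s - β 0) - logChange (fun s => α s - β 1)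
      + logChange (fun t => β t - α 1) - logChange (fun t => β t - α 0) = 0 := by
  obtain ⟨L, hL, hLexp⟩ := exists_continuous_log (g := fun p : ℝ × ℝ => α p.1 - β p.2)
    (by fun_prop) (fun p => sub_ne_zero.mpr (hαβ p.1 p.2))
  have hrow (t : ℝ) : logChange (fun s => α s - β t) = L (1, t) - L (0, t) :=
    logChange_eq (f := fun s => L (s, t)) (by fun_prop) fun s => hLexp (s, t)
  have hcol (s : ℝ) : logChange (fun t => β t - α s) = L (s, 1) - L (s, 0) := by
    rw [logChange_eq (f := fun t => L (s, t) + Real.pi * Complex.I) (by fun_prop)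
      fun t => by rw [Complex.exp_add, hLexp, Complex.exp_pi_mul_I]; ring]
    ring
  rw [hrow, hrow, hcol, hcol]
  ring

end Logarithm

section Embedding

variable {V : Type*} {G : SimpleGraph V}

/-- The position of the vertex `v`, as a complex number. -/
noncomputable def PlanarEmbedding.point (emb : PlanarEmbedding G) (v : V) : ℂ :=
  Complex.equivRealProdCLM.symm (emb.vpos v)

/-- A parametrisation of the arc of an edge, as a complex curve constant outside `[0, 1]`. -/
noncomputable def PlanarEmbedding.curve (emb : PlanarEmbedding G) {u v : V} (h : G.Adj u v)
    (t : ℝ) : ℂ :=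
  Complex.equivRealProdCLM.symm ((emb.arc_isArc h).choose.extend t)

namespace PlanarEmbedding

variable (emb : PlanarEmbedding G) {u v w x : V}

theorem point_injective : Function.Injective emb.point :=
  Complex.equivRealProdCLM.symm.injective.comp emb.vinj

theorem continuous_curve (h : G.Adj u v) : Continuous (emb.curve h) :=
  Complex.equivRealProdCLM.symm.continuous.comp (emb.arc_isArc h).choose.continuous_extend

@[simp]
theorem curve_zero (h : G.Adj u v) : emb.curve h 0 = emb.point u := by
  simp [curve, point]

@[simp]
theorem curve_one (h : G.Adj u v) : emb.curve h 1 = emb.point v := by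
  simp [curve, point]

theorem exists_mem_arc_eq_curve (h : G.Adj u v) (t : ℝ) :
    ∃ p ∈ emb.arc h, Complex.equivRealProdCLM.symm p = emb.curve h t := by
  have hrange := (Path.extend_range _).trans (emb.arc_isArc h).choose_spec.2
  exact ⟨_, hrange.subset (Set.mem_range_self t), rfl⟩

theorem curve_ne_point (h : G.Adj u v) (hu : w ≠ u) (hv : w ≠ v) (t : ℝ) :
    emb.curve h t ≠ emb.point w := by
  obtain ⟨p, hp, hpt⟩ := emb.exists_mem_arc_eq_curve h t
  rw [← hpt]
  intro heq
  obtain rfl := Complex.equivRealProdCLM.symm.injective heq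
  rcases emb.arc_vertex h w hp with rfl | rfl <;> contradiction

theorem curve_ne_curve (h : G.Adj u v) (h' : G.Adj w x)
    (huw : u ≠ w) (hux : u ≠ x) (hvw : v ≠ w) (hvx : v ≠ x) (s t : ℝ) :
    emb.curve h s ≠ emb.curve h' t := by
  obtain ⟨p, hp, hps⟩ := emb.exists_mem_arc_eq_curve h s
  obtain ⟨q, hq, hqt⟩ := emb.exists_mem_arc_eq_curve h' t
  rw [← hps, ← hqt]
  intro heq
  obtain rfl := Complex.equivRealProdCLM.symm.injective heq
  have hne : s(u, v) ≠ s(w, x) := by grind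
  obtain ⟨y, ⟨hy, hy'⟩, -⟩ := emb.arc_inter h h' hne ⟨hp, hq⟩
  simp only [Set.mem_insert_iff, Set.mem_singleton_iff] at hy hy'
  grind

end PlanarEmbedding

/-- All that is retained of a planar drawing of `G`: the vertices are points `pos v` of `ℂ`, and
`angle h w` is the change of a logarithm of `z - pos w` as `z` runs along the edge `h`, which is
meaningful only if `w` is not an endpoint of `h`. -/
structure AngleSystem {V : Type*} (G : SimpleGraph V) where
  pos : V → ℂ
  angle : ∀ {u v : V}, G.Adj u v → V → ℂ
  pos_injective : Function.Injective pos
  exp_angle : ∀ {u v w : V} (h : G.Adj u v), w ≠ u → w ≠ v →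
    Complex.exp (angle h w) = (pos v - pos w) / (pos u - pos w)
  angle_swap : ∀ {u v w x : V} (h : G.Adj u v) (h' : G.Adj w x),
    u ≠ w → u ≠ x → v ≠ w → v ≠ x → angle h w - angle h x + angle h' v - angle h' u = 0

/-- The angle system of a planar embedding. -/
noncomputable def PlanarEmbedding.angleSystem (emb : PlanarEmbedding G) : AngleSystem G where
  pos := emb.point
  angle h w := logChange fun t => emb.curve h t - emb.point w
  pos_injective := emb.point_injective
  exp_angle {_ _ w} h hu hv := by
    have hcont : Continuous fun t => emb.curve h t - emb.point w :=
      (emb.continuous_curve h).sub continuous_const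
    simpa only [curve_zero, curve_one] using
      exp_logChange hcont fun t => sub_ne_zero.mpr (emb.curve_ne_point h hu hv t)
  angle_swap h h' huw hux hvw hvx := by
    simpa only [curve_zero, curve_one] using logChange_swap (emb.continuous_curve h)
      (emb.continuous_curve h') (emb.curve_ne_curve h h' huw hux hvw hvx)

end Embedding

namespace AngleSystem

variable {V : Type*} {G : SimpleGraph V} (A : AngleSystem G)

/-- The angle swept along a walk, seen from the vertex `w`. -/
noncomputable def walkAngle : ∀ {u v : V}, G.Walk u v → V → ℂ
  | _, _, .nil, _ => 0
  | _, _, .cons h p, w => A.angle h w + walkAngle p w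

theorem walkAngle_append {u v x : V} (p : G.Walk u v) (q : G.Walk v x) (w : V) :
    A.walkAngle (p.append q) w = A.walkAngle p w + A.walkAngle q w := by
  induction p with
  | nil => simp [walkAngle]
  | cons h p ih => simp [walkAngle, ih, add_assoc]

theorem pos_sub_ne_zero {v w : V} (h : v ≠ w) : A.pos v - A.pos w ≠ 0 :=
  sub_ne_zero.mpr (A.pos_injective.ne h)

theorem exp_walkAngle {u v w : V} (p : G.Walk u v) (hw : w ∉ p.support) :
    Complex.exp (A.walkAngle p w) = (A.pos v - A.pos w) / (A.pos u - A.pos w) := by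
  induction p with
  | nil =>
    rw [walkAngle, Complex.exp_zero, div_self (A.pos_sub_ne_zero (by simpa [eq_comm] using hw))]
  | @cons a b c h p ih =>
    simp only [Walk.support_cons, List.mem_cons, not_or] at hw
    have hwb : w ≠ b := fun e => hw.2 (e ▸ p.start_mem_support)
    rw [walkAngle, Complex.exp_add, ih hw.2, A.exp_angle h hw.1 hwb, mul_comm,
      div_mul_div_cancel₀ (A.pos_sub_ne_zero hwb.symm)]

theorem angle_walk_swap {u v w x : V} (h : G.Adj u v) (q : G.Walk w x)
    (hu : u ∉ q.support) (hv : v ∉ q.support) :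
    A.angle h w - A.angle h x + A.walkAngle q v - A.walkAngle q u = 0 := by
  induction q with
  | nil => simp [walkAngle]
  | cons h' q ih =>
    simp only [Walk.support_cons, List.mem_cons, not_or] at hu hv
    have hfirst := A.angle_swap h h' hu.1 (fun e => hu.2 (e ▸ q.start_mem_support)) hv.1
      (fun e => hv.2 (e ▸ q.start_mem_support))
    simp only [walkAngle]
    linear_combination ih hu.2 hv.2 + hfirst

theorem walkAngle_swap {u v w x : V} (p : G.Walk u v) (q : G.Walk w x)
    (hpq : p.support.Disjoint q.support) :
    A.walkAngle p w - A.walkAngle p x + A.walkAngle q v - A.walkAngle q u = 0 := by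
  induction p with
  | nil => simp [walkAngle]
  | cons h p ih =>
    simp only [Walk.support_cons, List.disjoint_cons_left] at hpq
    have hfirst := A.angle_walk_swap h q hpq.1 (hpq.2 p.start_mem_support)
    simp only [walkAngle]
    linear_combination ih hpq.2 + hfirst

theorem walkAngle_sub_eq_of_disjoint {u v a b : V} (p p' : G.Walk u v) (q : G.Walk a b)
    (hpq : p.support.Disjoint q.support) (hpq' : p'.support.Disjoint q.support) :
    A.walkAngle p a - A.walkAngle p' a = A.walkAngle p b - A.walkAngle p' b := by
  linear_combination A.walkAngle_swap p q hpq - A.walkAngle_swap p' q hpq'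

/-- Swapping `L i` with `R j` halves the cyclic sum of the angles of the three closed walks, each
seen from the vertex it misses. Exponentiated, half the sum is a product of three ratios equal to
`-1`: each of the differences of `a`, `b`, `c` appears once with each sign. -/
theorem walkAngle_theta_ne_zero {u v a b c : V}
    (L₁ : G.Walk u a) (R₁ : G.Walk a v) (L₂ : G.Walk u b) (R₂ : G.Walk b v)
    (L₃ : G.Walk u c) (R₃ : G.Walk c v)
    (h₁₂ : L₁.support.Disjoint R₂.support) (h₁₃ : L₁.support.Disjoint R₃.support)
    (h₂₁ : L₂.support.Disjoint R₁.support) (h₂₃ : L₂.support.Disjoint R₃.support)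
    (h₃₁ : L₃.support.Disjoint R₁.support) (h₃₂ : L₃.support.Disjoint R₂.support) :
    (A.walkAngle (L₁.append R₁) c - A.walkAngle (L₂.append R₂) c)
      + (A.walkAngle (L₂.append R₂) a - A.walkAngle (L₃.append R₃) a)
      + (A.walkAngle (L₃.append R₃) b - A.walkAngle (L₁.append R₁) b) ≠ 0 := by
  intro hsum
  simp only [walkAngle_append] at hsum
  have hhalf : A.walkAngle R₂ a + A.walkAngle R₁ c + A.walkAngle R₃ b
      = A.walkAngle R₃ a + A.walkAngle R₁ b + A.walkAngle R₂ c := by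
    linear_combination (1 / 2) * hsum + (1 / 2) * (A.walkAngle_swap L₁ R₂ h₁₂
      - A.walkAngle_swap L₁ R₃ h₁₃ - A.walkAngle_swap L₂ R₁ h₂₁ + A.walkAngle_swap L₂ R₃ h₂₃
      + A.walkAngle_swap L₃ R₁ h₃₁ - A.walkAngle_swap L₃ R₂ h₃₂)
  have hexp {x y : V} (L : G.Walk u x) (R : G.Walk y v) (hLR : L.support.Disjoint R.support) :
      Complex.exp (A.walkAngle R x) = (A.pos v - A.pos x) / (A.pos y - A.pos x) ∧
        A.pos v - A.pos x ≠ 0 ∧ A.pos y - A.pos x ≠ 0 := by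
    have hx : x ∉ R.support := hLR L.end_mem_support
    exact ⟨A.exp_walkAngle R hx, A.pos_sub_ne_zero fun e => hx (e ▸ R.end_mem_support),
      A.pos_sub_ne_zero fun e => hx (e ▸ R.start_mem_support)⟩
  obtain ⟨e₁₂, hva, hba⟩ := hexp L₁ R₂ h₁₂
  obtain ⟨e₂₃, hvb, hcb⟩ := hexp L₂ R₃ h₂₃
  obtain ⟨e₃₁, hvc, hac⟩ := hexp L₃ R₁ h₃₁
  obtain ⟨e₁₃, -, hca⟩ := hexp L₁ R₃ h₁₃
  obtain ⟨e₂₁, -, hab⟩ := hexp L₂ R₁ h₂₁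
  obtain ⟨e₃₂, -, hbc⟩ := hexp L₃ R₂ h₃₂
  have hprod := congrArg Complex.exp hhalf
  simp only [Complex.exp_add, e₁₂, e₁₃, e₂₁, e₂₃, e₃₁, e₃₂] at hprod
  rw [← neg_sub (A.pos a) (A.pos c), ← neg_sub (A.pos b) (A.pos a),
    ← neg_sub (A.pos c) (A.pos b)] at hprod
  generalize A.pos a - A.pos c = x at *
  generalize A.pos b - A.pos a = y at *
  generalize A.pos c - A.pos b = z at *
  field_simp [hca, hab, hbc] at hprod
  norm_num at hprod

/-- `G` contains no subdivision of `K₃,₃`: the nine walks join each of `u`, `v`, `d` to each of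
`a`, `b`, `c`. Only the disjointness needed for the contradiction is assumed. -/
theorem false_of_subdivision_K₃₃ (A : AngleSystem G) {u v d a b c : V}
    (L₁ : G.Walk u a) (R₁ : G.Walk a v) (L₂ : G.Walk u b) (R₂ : G.Walk b v)
    (L₃ : G.Walk u c) (R₃ : G.Walk c v)
    (Q₁ : G.Walk a d) (Q₂ : G.Walk b d) (Q₃ : G.Walk c d)
    (h₁₂ : L₁.support.Disjoint R₂.support) (h₁₃ : L₁.support.Disjoint R₃.support)
    (h₂₁ : L₂.support.Disjoint R₁.support) (h₂₃ : L₂.support.Disjoint R₃.support)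
    (h₃₁ : L₃.support.Disjoint R₁.support) (h₃₂ : L₃.support.Disjoint R₂.support)
    (hQ₁₂ : (L₂.append R₂).support.Disjoint Q₁.support)
    (hQ₁₃ : (L₃.append R₃).support.Disjoint Q₁.support)
    (hQ₂₁ : (L₁.append R₁).support.Disjoint Q₂.support)
    (hQ₂₃ : (L₃.append R₃).support.Disjoint Q₂.support)
    (hQ₃₁ : (L₁.append R₁).support.Disjoint Q₃.support)
    (hQ₃₂ : (L₂.append R₂).support.Disjoint Q₃.support) : False := by
  refine A.walkAngle_theta_ne_zero L₁ R₁ L₂ R₂ L₃ R₃ h₁₂ h₁₃ h₂₁ h₂₃ h₃₁ h₃₂ ?_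
  linear_combination A.walkAngle_sub_eq_of_disjoint _ _ Q₃ hQ₃₁ hQ₃₂
    + A.walkAngle_sub_eq_of_disjoint _ _ Q₁ hQ₁₂ hQ₁₃
    + A.walkAngle_sub_eq_of_disjoint _ _ Q₂ hQ₂₃ hQ₂₁

end AngleSystem

section Connectivity

variable {V : Type*} {G : SimpleGraph V} {S T : Set V} {x y z : V}

/-- The vertices joined to `x` by a walk inside `S`; empty if `x ∉ S`. -/
def reachSet (G : SimpleGraph V) (S : Set V) (x : V) : Set V :=
  {y | ∃ p : G.Walk x y, ∀ w ∈ p.support, w ∈ S}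

/-- Any two vertices of `S` are joined by a walk inside `S`. This is preconnectedness of
`G.induce S`, phrased with walks of `G` to avoid subtypes. -/
def PreconnectedOn (G : SimpleGraph V) (S : Set V) : Prop :=
  ∀ x ∈ S, ∀ y ∈ S, y ∈ reachSet G S x

theorem reachSet_subset : reachSet G S x ⊆ S :=
  fun y ⟨p, hp⟩ => hp y p.end_mem_support

theorem mem_reachSet_self (hx : x ∈ S) : x ∈ reachSet G S x :=
  ⟨.nil, by simpa using hx⟩

theorem mem_of_mem_reachSet (h : y ∈ reachSet G S x) : x ∈ S :=
  let ⟨p, hp⟩ := h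
  hp x p.start_mem_support

theorem mem_reachSet_symm (h : y ∈ reachSet G S x) : x ∈ reachSet G S y :=
  let ⟨p, hp⟩ := h
  ⟨p.reverse, by simpa using hp⟩

theorem mem_reachSet_trans (hxy : y ∈ reachSet G S x) (hyz : z ∈ reachSet G S y) :
    z ∈ reachSet G S x := by
  obtain ⟨p, hp⟩ := hxy
  obtain ⟨q, hq⟩ := hyz
  refine ⟨p.append q, fun w hw => ?_⟩
  exact ((Walk.mem_support_append_iff _ _).mp hw).elim (hp w) (hq w)

theorem mem_reachSet_of_adj (hy : y ∈ reachSet G S x) (hyz : G.Adj y z) (hz : z ∈ S) :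
    z ∈ reachSet G S x :=
  mem_reachSet_trans hy ⟨hyz.toWalk, by simp [reachSet_subset hy, hz]⟩

theorem reachSet_mono (h : S ⊆ T) : reachSet G S x ⊆ reachSet G T x :=
  fun _ ⟨p, hp⟩ => ⟨p, fun w hw => h (hp w hw)⟩

theorem mem_reachSet_of_mem_support (p : G.Walk x y) (hp : ∀ w ∈ p.support, w ∈ S)
    (hz : z ∈ p.support) : z ∈ reachSet G S x := by
  classical
  exact ⟨p.takeUntil z hz, fun w hw => hp w (p.support_takeUntil_subset_support hz hw)⟩

theorem preconnectedOn_of_subset_reachSet (h : S ⊆ reachSet G S x) : PreconnectedOn G S :=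
  fun _ ha _ hb => mem_reachSet_trans (mem_reachSet_symm (h ha)) (h hb)

theorem preconnectedOn_reachSet : PreconnectedOn G (reachSet G S x) :=
  preconnectedOn_of_subset_reachSet
    fun _ ⟨p, hp⟩ => ⟨p, fun _ hw => mem_reachSet_of_mem_support p hp hw⟩

theorem preconnectedOn_support (p : G.Walk x y) : PreconnectedOn G {w | w ∈ p.support} :=
  preconnectedOn_of_subset_reachSet fun _ hz => mem_reachSet_of_mem_support p (fun _ hw => hw) hz

theorem PreconnectedOn.subset_of_adj_closed (h : PreconnectedOn G S) (hx : x ∈ S) (hxT : x ∈ T)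
    (hT : ∀ a ∈ T, a ∈ S → ∀ b ∈ S, G.Adj a b → b ∈ T) : S ⊆ T := by
  intro y hy
  by_contra hyT
  obtain ⟨p, hp⟩ := h x hx y hy
  obtain ⟨d, hd, hfst, hsnd⟩ := p.exists_boundary_dart T hxT hyT
  exact hsnd (hT _ hfst (hp _ (p.dart_fst_mem_support_of_mem_darts hd)) _
    (hp _ (p.dart_snd_mem_support_of_mem_darts hd)) d.adj)

theorem mem_reachSet_iff_reachable (hx : x ∈ S) (hy : y ∈ S) :
    y ∈ reachSet G S x ↔ (G.induce S).Reachable ⟨x, hx⟩ ⟨y, hy⟩ := by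
  refine ⟨fun ⟨p, hp⟩ => ⟨p.induce S hp⟩, fun ⟨p⟩ => ?_⟩
  refine ⟨p.map (Embedding.induce S).toHom, fun w hw => ?_⟩
  obtain ⟨w', -, rfl⟩ := List.mem_map.mp (p.support_map _ ▸ hw)
  exact w'.2

theorem preconnectedOn_iff : PreconnectedOn G S ↔ (G.induce S).Preconnected :=
  ⟨fun h a b => (mem_reachSet_iff_reachable a.2 b.2).mp (h a a.2 b b.2),
    fun h _ hx _ hy => (mem_reachSet_iff_reachable hx hy).mpr (h _ _)⟩

theorem preconnectedOn_univ : PreconnectedOn G Set.univ ↔ G.Preconnected :=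
  ⟨fun h a b => let ⟨p, _⟩ := h a trivial b trivial; ⟨p⟩,
    fun h a _ b _ => let ⟨p⟩ := h a b; ⟨p, fun _ _ => trivial⟩⟩

theorem supp_componentComplMk (hx : x ∉ S) :
    (G.componentComplMk hx).supp = reachSet G Sᶜ x := by
  ext y
  constructor
  · rintro ⟨hy, h⟩
    exact mem_reachSet_symm ((mem_reachSet_iff_reachable hy hx).mpr (ConnectedComponent.eq.mp h))
  · intro h
    have hy : y ∈ Sᶜ := reachSet_subset h
    exact ⟨hy, ConnectedComponent.eq.mpr
      ((mem_reachSet_iff_reachable hy hx).mp (mem_reachSet_symm h))⟩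

theorem OneEnded.exists_infinite_reachSet (hone : OneEnded G) (hS : S.Finite) :
    ∃ x, (reachSet G Sᶜ x).Infinite := by
  obtain ⟨C, hC, -⟩ := hone hS.toFinset
  obtain ⟨x, hx, rfl⟩ := C.exists_eq_mk
  rw [supp_componentComplMk hx, hS.coe_toFinset] at hC
  exact ⟨x, hC⟩

theorem OneEnded.mem_reachSet (hone : OneEnded G) (hS : S.Finite)
    (hx : (reachSet G Sᶜ x).Infinite) (hy : (reachSet G Sᶜ y).Infinite) :
    y ∈ reachSet G Sᶜ x := by
  have hxS : x ∉ S := mem_of_mem_reachSet hx.nonempty.some_mem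
  have hyS : y ∉ S := mem_of_mem_reachSet hy.nonempty.some_mem
  have huniq := hone hS.toFinset
  rw [hS.coe_toFinset] at huniq
  have heq : G.componentComplMk hyS = G.componentComplMk hxS :=
    huniq.unique (by rwa [supp_componentComplMk]) (by rwa [supp_componentComplMk])
  rw [← supp_componentComplMk hxS, ← heq]
  exact ComponentCompl.mem_supp_iff.mpr (componentComplMk_mem G hyS)

theorem OneEnded.infinite (hone : OneEnded G) : Infinite V := by
  obtain ⟨x, hx⟩ := hone.exists_infinite_reachSet Set.finite_empty
  exact Set.infinite_univ_iff.mp (hx.mono (Set.subset_univ _))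

end Connectivity

section ThreeConnectivity

variable {V : Type*} {G : SimpleGraph V}

/-- The automorphism group of `G` acts transitively on the vertices. -/
def VertexTransitive (G : SimpleGraph V) : Prop :=
  ∀ u v : V, ∃ α : G ≃g G, α u = v

theorem VertexTransitive.preconnected (htrans : VertexTransitive G) (hone : OneEnded G) :
    G.Preconnected := by
  obtain ⟨x, hx⟩ := hone.exists_infinite_reachSet Set.finite_empty
  have hinf (y : V) : (reachSet G ∅ᶜ y).Infinite := by
    obtain ⟨α, rfl⟩ := htrans x y
    refine (hx.image (f := α) α.injective.injOn).mono ?_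
    rintro _ ⟨z, ⟨p, -⟩, rfl⟩
    exact ⟨p.map α.toHom, fun _ _ => Set.notMem_empty _⟩
  intro y z
  obtain ⟨p, -⟩ := hone.mem_reachSet Set.finite_empty (hinf y) (hinf z)
  exact ⟨p⟩

theorem isCycle_cons_concat {o a b : V} {p : G.Walk a b} (hp : p.IsPath) (ho : o ∉ p.support)
    (hab : a ≠ b) (hoa : G.Adj o a) (hbo : G.Adj b o) :
    (Walk.cons hoa (p.concat hbo)).IsCycle := by
  rw [Walk.cons_isCycle_iff, Walk.concat_isPath_iff]
  refine ⟨⟨hp, ho⟩, ?_⟩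
  rw [Walk.edges_concat, List.concat_eq_append, List.mem_append, List.mem_singleton, not_or]
  refine ⟨fun h => ho (p.fst_mem_support_of_mem_edges h), ?_⟩
  have := hbo.ne
  grind

theorem mem_support_of_adj_of_degree_le_two [G.LocallyFinite] {o x y : V}
    {c : G.Walk o o} (hc : c.IsCycle) (hx : x ∈ c.support) (hdeg : G.degree x ≤ 2)
    (hxy : G.Adj x y) : y ∈ c.support := by
  have hsub : c.toSubgraph.neighborSet x ⊆ G.neighborSet x := fun w hw => c.toSubgraph.adj_sub hw
  have heq : c.toSubgraph.neighborSet x = G.neighborSet x := by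
    refine Set.eq_of_subset_of_ncard_le hsub ?_ (Set.toFinite _)
    rw [hc.ncard_neighborSet_toSubgraph_eq_two hx]
    rwa [← Nat.card_coe_set_eq, Nat.card_eq_fintype_card, card_neighborSet_eq_degree]
  have hy : y ∈ c.toSubgraph.neighborSet x := heq ▸ hxy
  exact c.mem_verts_toSubgraph.mp (c.toSubgraph.edge_vert hy.symm)

variable [G.LocallyFinite]

open Classical in
/-- The vertices outside `X` with a neighbour in `X`. -/
noncomputable def outerBoundary (G : SimpleGraph V) [G.LocallyFinite] (X : Finset V) : Finset V :=
  X.biUnion (fun x => G.neighborFinset x) \ X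

@[simp]
theorem mem_outerBoundary {X : Finset V} {y : V} :
    y ∈ outerBoundary G X ↔ (∃ x ∈ X, G.Adj x y) ∧ y ∉ X := by
  simp [outerBoundary]

open Classical in
theorem card_outerBoundary_inter_add_union_le (A B : Finset V) :
    (outerBoundary G (A ∩ B)).card + (outerBoundary G (A ∪ B)).card
      ≤ (outerBoundary G A).card + (outerBoundary G B).card := by
  rw [← Finset.card_union_add_card_inter (outerBoundary G (A ∩ B)),
    ← Finset.card_union_add_card_inter (outerBoundary G A)]
  apply Nat.add_le_add <;> apply Finset.card_le_card <;> intro y <;>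
    simp only [Finset.mem_union, Finset.mem_inter, mem_outerBoundary] <;> grind

open Classical in
theorem card_outerBoundary_image (α : G ≃g G) (A : Finset V) :
    (outerBoundary G (A.image α)).card = (outerBoundary G A).card := by
  rw [← Finset.card_image_of_injective (outerBoundary G A) α.injective]
  congr 1
  ext y
  obtain ⟨z, rfl⟩ := α.surjective y
  simp [α.injective.eq_iff, α.map_adj_iff]

theorem outerBoundary_singleton (v : V) : outerBoundary G {v} = G.neighborFinset v := by
  ext y
  simpa using fun h : G.Adj v y => h.ne'

theorem outerBoundary_nonempty [Infinite V] (hconn : G.Preconnected) {X : Finset V}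
    (hX : X.Nonempty) : (outerBoundary G X).Nonempty := by
  by_contra hempty
  obtain ⟨x, hx⟩ := hX
  have huniv : Set.univ ⊆ (X : Set V) := by
    refine (preconnectedOn_univ.mpr hconn).subset_of_adj_closed trivial hx ?_
    intro a ha _ b _ hab
    by_contra hb
    exact hempty ⟨b, mem_outerBoundary.mpr ⟨⟨a, ha, hab⟩, hb⟩⟩
  exact Set.infinite_univ (X.finite_toSet.subset huniv)

/-- `A` is a *`k`-atom*: a smallest nonempty finite vertex set with at most `k` vertices in its
outer boundary. -/
structure IsBoundaryAtom (G : SimpleGraph V) [G.LocallyFinite] (k : ℕ) (A : Finset V) : Prop where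
  nonempty : A.Nonempty
  card_outerBoundary_le : (outerBoundary G A).card ≤ k
  card_le : ∀ B : Finset V, B.Nonempty → (outerBoundary G B).card ≤ k → A.card ≤ B.card

theorem exists_isBoundaryAtom {k : ℕ} {X : Finset V} (hX : X.Nonempty)
    (hXk : (outerBoundary G X).card ≤ k) : ∃ A, IsBoundaryAtom G k A := by
  obtain ⟨A, ⟨hA, hAk⟩, hmin⟩ := (measure (Finset.card (α := V))).wf.has_min
    {X | X.Nonempty ∧ (outerBoundary G X).card ≤ k} ⟨X, hX, hXk⟩
  exact ⟨A, hA, hAk, fun B hB hBk => not_lt.mp (hmin B ⟨hB, hBk⟩)⟩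

open Classical in
theorem IsBoundaryAtom.disjoint_of_card_eq {k : ℕ} {A B : Finset V} (hA : IsBoundaryAtom G k A)
    (hk : ∀ X : Finset V, X.Nonempty → k ≤ (outerBoundary G X).card)
    (hBk : (outerBoundary G B).card ≤ k) (hAB : B.card = A.card) (hne : A ≠ B) :
    Disjoint A B := by
  rw [Finset.disjoint_iff_inter_eq_empty]
  by_contra hinter
  have hsubmod := card_outerBoundary_inter_add_union_le (G := G) A B
  have hunion := hk (A ∪ B) (hA.nonempty.mono Finset.subset_union_left)
  have hAk := hA.card_outerBoundary_le
  have hcard := hA.card_le _ (Finset.nonempty_iff_ne_empty.mpr hinter) (by omega)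
  have hsub : A ⊆ B :=
    Finset.inter_eq_left.mp (Finset.eq_of_subset_of_card_le Finset.inter_subset_left hcard)
  exact hne (Finset.eq_of_subset_of_card_le hsub hAB.le)

open Classical in
theorem IsBoundaryAtom.exists_adj_translate {k : ℕ} {A : Finset V} (hA : IsBoundaryAtom G k A)
    (htrans : VertexTransitive G) (hk₀ : 0 < k)
    (hk : ∀ X : Finset V, X.Nonempty → k ≤ (outerBoundary G X).card) :
    ∃ B : Finset V, Disjoint A B ∧ (∃ a ∈ A, ∃ b ∈ B, G.Adj a b) ∧
      (outerBoundary G A ∩ B).card + (outerBoundary G B ∩ A).card ≤ k := by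
  obtain ⟨s, hs⟩ := Finset.card_pos.mp (hk₀.trans_le (hk A hA.nonempty))
  obtain ⟨⟨a, ha, has⟩, hsA⟩ := mem_outerBoundary.mp hs
  obtain ⟨α, rfl⟩ := htrans a s
  have hBk := (card_outerBoundary_image α A).trans_le hA.card_outerBoundary_le
  have hsB : α a ∈ A.image α := Finset.mem_image_of_mem α ha
  refine ⟨A.image α, hA.disjoint_of_card_eq hk hBk (Finset.card_image_of_injective _ α.injective)
    fun h => hsA (h ▸ hsB), ⟨a, ha, α a, hsB, has⟩, ?_⟩
  generalize A.image α = B at *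
  have hunion := hk (A ∪ B) (hA.nonempty.mono Finset.subset_union_left)
  have hsub : outerBoundary G (A ∪ B) ⊆ (outerBoundary G A \ B) ∪ (outerBoundary G B \ A) := by
    intro y
    simp only [Finset.mem_union, Finset.mem_sdiff, mem_outerBoundary]
    grind
  have hcard := (Finset.card_le_card hsub).trans (Finset.card_union_le _ _)
  have hAsplit := Finset.card_sdiff_add_card_inter (outerBoundary G A) B
  have hBsplit := Finset.card_sdiff_add_card_inter (outerBoundary G B) A
  have hAk := hA.card_outerBoundary_le
  omega

theorem two_le_card_outerBoundary [Infinite V] (htrans : VertexTransitive G)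
    (hconn : G.Preconnected) {X : Finset V} (hX : X.Nonempty) :
    2 ≤ (outerBoundary G X).card := by
  classical
  by_contra hcon
  obtain ⟨A, hA⟩ := exists_isBoundaryAtom (G := G) (k := 1) hX (by omega)
  obtain ⟨B, hAB, ⟨a, ha, b, hb, hab⟩, hle⟩ := hA.exists_adj_translate htrans one_pos
    fun Y hY => (outerBoundary_nonempty hconn hY).card_pos
  have hbA : b ∈ outerBoundary G A ∩ B :=
    Finset.mem_inter.mpr ⟨mem_outerBoundary.mpr
      ⟨⟨a, ha, hab⟩, Finset.disjoint_right.mp hAB hb⟩, hb⟩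
  have haB : a ∈ outerBoundary G B ∩ A :=
    Finset.mem_inter.mpr ⟨mem_outerBoundary.mpr
      ⟨⟨b, hb, hab.symm⟩, Finset.disjoint_left.mp hAB ha⟩, ha⟩
  have := Finset.card_pos.mpr ⟨b, hbA⟩
  have := Finset.card_pos.mpr ⟨a, haB⟩
  omega

theorem mem_outerBoundary_reachSet {S : Set V} {x y : V} (hfin : (reachSet G S x).Finite)
    (hy : y ∈ outerBoundary G hfin.toFinset) : y ∉ S := by
  obtain ⟨⟨a, ha, hay⟩, hyn⟩ := mem_outerBoundary.mp hy
  rw [hfin.mem_toFinset] at ha hyn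
  exact fun hyS => hyn (mem_reachSet_of_adj ha hay hyS)

theorem OneEnded.preconnectedOn_compl (hone : OneEnded G) {S : Set V} (hS : S.Finite)
    (hbdry : ∀ X : Finset V, X.Nonempty → S.ncard < (outerBoundary G X).card) :
    PreconnectedOn G Sᶜ := by
  have hinf : ∀ x ∈ Sᶜ, (reachSet G Sᶜ x).Infinite := by
    intro x hx hfin
    have hsub : (outerBoundary G hfin.toFinset : Set V) ⊆ S :=
      fun y hy => not_not.mp (mem_outerBoundary_reachSet hfin hy)
    have hle := Set.ncard_le_ncard hsub hS
    rw [Set.ncard_coe_finset] at hle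
    exact (hbdry _ ⟨x, by simpa using mem_reachSet_self hx⟩).not_ge hle
  exact fun x hx y hy => hone.mem_reachSet hS (hinf x hx) (hinf y hy)

/-- A connected infinite graph all of whose degrees are `2` would be a double ray, which has two
ends. -/
theorem VertexTransitive.three_le_degree (htrans : VertexTransitive G) (hone : OneEnded G)
    (o : V) : 3 ≤ G.degree o := by
  have := hone.infinite
  have hconn := htrans.preconnected hone
  classical
  by_contra hcon
  have htwo (X : Finset V) (hX : X.Nonempty) := two_le_card_outerBoundary htrans hconn hX
  have hdeg (v : V) : G.degree v = 2 := by
    have hv := htwo {v} (Finset.singleton_nonempty v)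
    rw [outerBoundary_singleton, card_neighborFinset_eq_degree] at hv
    obtain ⟨α, rfl⟩ := htrans v o
    rw [α.degree_eq] at hcon
    omega
  obtain ⟨a, b, hab, hN⟩ := Finset.card_eq_two.mp (hdeg o)
  have hoa : G.Adj o a := by simp [← mem_neighborFinset, hN]
  have hob : G.Adj o b := by simp [← mem_neighborFinset, hN]
  have hconn' : PreconnectedOn G {o}ᶜ := hone.preconnectedOn_compl (Set.finite_singleton o)
    fun X hX => by simpa using Nat.lt_of_succ_le (htwo X hX)
  obtain ⟨p, hp⟩ := hconn' a hoa.ne' b hob.ne'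
  have ho : o ∉ p.bypass.support := fun h => hp o (p.support_bypass_subset_support h) rfl
  have hc := isCycle_cons_concat p.bypass_isPath ho hab hoa hob.symm
  set c := Walk.cons hoa (p.bypass.concat hob.symm)
  have huniv : Set.univ ⊆ {x | x ∈ c.support} :=
    (preconnectedOn_univ.mpr hconn).subset_of_adj_closed trivial c.start_mem_support
      fun x hx _ _ _ hxy => mem_support_of_adj_of_degree_le_two hc hx (hdeg x).le hxy
  exact Set.infinite_univ ((List.finite_toSet c.support).subset huniv)

open Classical in
theorem outerBoundary_erase_subset {A B : Finset V} {a b : V} (hAB : Disjoint A B) (hb : b ∈ B)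
    (huniq : ∀ x ∈ outerBoundary G B ∩ A, x = a) :
    outerBoundary G (A.erase a) ⊆ insert a ((outerBoundary G A).erase b) := by
  intro y hy
  obtain ⟨⟨x, hx, hxy⟩, hyn⟩ := mem_outerBoundary.mp hy
  obtain ⟨hxa, hxA⟩ := Finset.mem_erase.mp hx
  have hyb : y ≠ b := by
    rintro rfl
    refine hxa (huniq x ?_)
    exact Finset.mem_inter.mpr ⟨mem_outerBoundary.mpr
      ⟨⟨y, hb, hxy.symm⟩, Finset.disjoint_left.mp hAB hxA⟩, hxA⟩
  by_cases hya : y = a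
  · exact Finset.mem_insert.mpr (Or.inl hya)
  · have hyA : y ∉ A := fun h => hyn (Finset.mem_erase.mpr ⟨hya, h⟩)
    exact Finset.mem_insert_of_mem
      (Finset.mem_erase.mpr ⟨hyb, mem_outerBoundary.mpr ⟨⟨x, hxA, hxy⟩, hyA⟩⟩)

theorem VertexTransitive.three_le_card_outerBoundary (htrans : VertexTransitive G)
    (hone : OneEnded G) {X : Finset V} (hX : X.Nonempty) : 3 ≤ (outerBoundary G X).card := by
  classical
  have := hone.infinite
  by_contra hcon
  obtain ⟨A, hA⟩ := exists_isBoundaryAtom (G := G) (k := 2) hX (by omega)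
  obtain ⟨B, hAB, ⟨a, ha, b, hb, hab⟩, hle⟩ := hA.exists_adj_translate htrans two_pos
    fun Y hY => two_le_card_outerBoundary htrans (htrans.preconnected hone) hY
  have hbA : b ∈ outerBoundary G A :=
    mem_outerBoundary.mpr ⟨⟨a, ha, hab⟩, Finset.disjoint_right.mp hAB hb⟩
  have haB : a ∈ outerBoundary G B ∩ A :=
    Finset.mem_inter.mpr ⟨mem_outerBoundary.mpr
      ⟨⟨b, hb, hab.symm⟩, Finset.disjoint_left.mp hAB ha⟩, ha⟩
  have hbpos := Finset.card_pos.mpr ⟨b, Finset.mem_inter.mpr ⟨hbA, hb⟩⟩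
  have huniq : ∀ x ∈ outerBoundary G B ∩ A, x = a :=
    fun x hx => Finset.card_le_one.mp (by omega) x hx a haB
  have hcard := (Finset.card_le_card (outerBoundary_erase_subset hAB hb huniq)).trans
    (Finset.card_insert_le _ _)
  rw [Finset.card_erase_of_mem hbA] at hcard
  have hAk := hA.card_outerBoundary_le
  rcases (A.erase a).eq_empty_or_nonempty with hempty | hne
  · obtain rfl : A = {a} := ((Finset.erase_eq_empty_iff _ _).mp hempty).resolve_left
      (Finset.ne_empty_of_mem ha)
    rw [outerBoundary_singleton, card_neighborFinset_eq_degree] at hAk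
    exact absurd (htrans.three_le_degree hone a) (by omega)
  · have := hA.card_le _ hne (by omega)
    have := Finset.card_erase_lt_of_mem ha
    omega

theorem VertexTransitive.threeConnected (htrans : VertexTransitive G) (hone : OneEnded G) :
    ThreeConnected G := by
  have hinf := hone.infinite
  refine ⟨Or.inr hinf, fun s hs hcard => ?_⟩
  have hpre := hone.preconnectedOn_compl hs fun X hX =>
    hcard.trans_lt (htrans.three_le_card_outerBoundary hone hX)
  exact connected_iff _ |>.mpr ⟨preconnectedOn_iff.mp hpre, hs.infinite_compl.nonempty.to_subtype⟩

end ThreeConnectivity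

section WalkLemmas

variable {V : Type*} {G : SimpleGraph V} {u v : V}

theorem exists_eq_append_of_first_mem {S : Set V} (p : G.Walk u v) (h : ∃ x ∈ p.support, x ∈ S) :
    ∃ t ∈ S, ∃ (q : G.Walk u t) (r : G.Walk t v), p = q.append r ∧
      ∀ x ∈ q.support, x ∈ S → x = t := by
  classical
  obtain ⟨x, hx, hxS⟩ := h
  obtain ⟨t, ht, htp, hfirst⟩ := p.exists_mem_support_forall_mem_support_imp_eq
    (p.support.toFinset.filter (· ∈ S)) ⟨x, by simp [hx, hxS]⟩
  refine ⟨t, (Finset.mem_filter.mp ht).2, _, _, (p.take_spec htp).symm, fun y hy hyS => ?_⟩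
  refine hfirst y (Finset.mem_filter.mpr ⟨List.mem_toFinset.mpr ?_, hyS⟩) hy
  exact p.support_takeUntil_subset_support htp hy

theorem exists_eq_append_of_last_mem {S : Set V} (p : G.Walk u v) (h : ∃ x ∈ p.support, x ∈ S) :
    ∃ t ∈ S, ∃ (q : G.Walk u t) (r : G.Walk t v), p = q.append r ∧
      ∀ x ∈ r.support, x ∈ S → x = t := by
  obtain ⟨t, ht, q, r, hqr, hlast⟩ := exists_eq_append_of_first_mem (S := S) p.reverse (by simpa)
  refine ⟨t, ht, r.reverse, q.reverse, ?_, by simpa using hlast⟩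
  rw [← Walk.reverse_append, ← hqr, Walk.reverse_reverse]

theorem preconnectedOn_support_diff_start {p : G.Walk u v} (hp : p.IsPath) :
    PreconnectedOn G ({x | x ∈ p.support} \ {u}) := by
  cases p with
  | nil => intro x hx; simp at hx
  | cons h q =>
    rw [Walk.cons_isPath_iff] at hp
    convert preconnectedOn_support q using 1
    ext x
    simp only [Walk.support_cons, List.mem_cons, Set.mem_sdiff, Set.mem_ofPred_eq,
      Set.mem_singleton_iff]
    grind

theorem preconnectedOn_support_diff_end {p : G.Walk u v} (hp : p.IsPath) :
    PreconnectedOn G ({x | x ∈ p.support} \ {v}) := by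
  simpa using preconnectedOn_support_diff_start hp.reverse

theorem preconnectedOn_support_diff_ends {p : G.Walk u v} (hp : p.IsPath) :
    PreconnectedOn G ({x | x ∈ p.support} \ {u, v}) := by
  cases p with
  | nil => intro x hx; simp at hx
  | cons h q =>
    rw [Walk.cons_isPath_iff] at hp
    convert preconnectedOn_support_diff_end hp.1 using 1
    ext x
    simp only [Walk.support_cons, List.mem_cons, Set.mem_sdiff, Set.mem_ofPred_eq,
      Set.mem_insert_iff, Set.mem_singleton_iff]
    grind

end WalkLemmas

section InnerBoundary

variable {V : Type*} {G : SimpleGraph V} {U : Set V} {s t : V}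

/-- The vertices of `U` with a neighbour outside `U`. -/
def innerBoundary (G : SimpleGraph V) (U : Set V) : Set V :=
  {x ∈ U | ∃ y ∉ U, G.Adj x y}

theorem ThreeConnected.preconnected (hG : ThreeConnected G) : G.Preconnected := by
  have h := hG.2 ∅ Set.finite_empty (by simp)
  exact preconnectedOn_univ.mp (Set.compl_empty ▸ preconnectedOn_iff.mpr h.preconnected)

theorem ThreeConnected.preconnectedOn_compl_pair (hG : ThreeConnected G) (s t : V) :
    PreconnectedOn G {s, t}ᶜ :=
  preconnectedOn_iff.mpr (hG.2 {s, t} (Set.toFinite _)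
    ((Set.ncard_insert_le s {t}).trans_eq (by rw [Set.ncard_singleton]))).preconnected

theorem ThreeConnected.exists_adj_notMem [Infinite V] (hG : ThreeConnected G) (hU : U.Finite)
    (hne : U.Nonempty) (s t : V) : ∃ x ∈ U, ∃ y ∉ U, G.Adj x y ∧ y ≠ s ∧ y ≠ t := by
  obtain ⟨x, hx⟩ := hne
  set K : Set V := {s, t} \ U
  have hKfin : K.Finite := (Set.toFinite {s, t}).sdiff
  have hK : K.ncard ≤ 2 := (Set.ncard_le_ncard Set.sdiff_subset).trans <|
    (Set.ncard_insert_le s {t}).trans_eq (by rw [Set.ncard_singleton])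
  have hUK : U ⊆ Kᶜ := fun y hy h => h.2 hy
  obtain ⟨z, hz⟩ : ∃ z, z ∉ U ∪ K := (hU.union hKfin).exists_notMem
  by_contra! hclosed
  have hsub : Kᶜ ⊆ U :=
    (preconnectedOn_iff.mpr (hG.2 K hKfin hK).preconnected).subset_of_adj_closed (hUK hx) hx
      fun a ha _ b hb hab => by
        by_contra hbU
        exact hb ⟨or_iff_not_imp_left.mpr (hclosed a ha b hbU hab), hbU⟩
  exact hz (Or.inl (hsub fun h => hz (Or.inr h)))

theorem ThreeConnected.exists_innerBoundary_ne [Infinite V] (hG : ThreeConnected G)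
    (hU : U.Finite) (hne : (U \ {s, t}).Nonempty) :
    ∃ x ∈ innerBoundary G U, x ≠ s ∧ x ≠ t := by
  obtain ⟨x, ⟨hxU, hx⟩, y, hy, hxy, hys, hyt⟩ := hG.exists_adj_notMem hU.sdiff hne s t
  rw [Set.mem_insert_iff, Set.mem_singleton_iff, not_or] at hx
  exact ⟨x, ⟨hxU, y, fun h => hy ⟨h, by simp [hys, hyt]⟩, hxy⟩, hx⟩

theorem ThreeConnected.preconnectedOn_diff_pair [Infinite V] (hG : ThreeConnected G)
    (hU : U.Finite) {T : Set V} (hT : PreconnectedOn G T) (hTU : T ⊆ U \ {s, t})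
    (hbd : innerBoundary G U \ {s, t} ⊆ T) : PreconnectedOn G (U \ {s, t}) := by
  have hmeet : ∀ x ∈ U \ {s, t}, ∃ a ∈ T, a ∈ reachSet G (U \ {s, t}) x := by
    intro x hx
    have hfin : (reachSet G (U \ {s, t}) x).Finite := hU.sdiff.subset reachSet_subset
    obtain ⟨a, ha, b, hb, hab, hbs, hbt⟩ :=
      hG.exists_adj_notMem hfin ⟨x, mem_reachSet_self hx⟩ s t
    have haU := reachSet_subset ha
    have hbU : b ∉ U := fun h => hb (mem_reachSet_of_adj ha hab ⟨h, by simp [hbs, hbt]⟩)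
    exact ⟨a, hbd ⟨⟨haU.1, b, hbU, hab⟩, haU.2⟩, ha⟩
  intro x hx y hy
  obtain ⟨a, ha, hxa⟩ := hmeet x hx
  obtain ⟨b, hb, hyb⟩ := hmeet y hy
  exact mem_reachSet_trans hxa
    (mem_reachSet_trans (reachSet_mono hTU (hT a ha b hb)) (mem_reachSet_symm hyb))

theorem PreconnectedOn.compl_diff_singleton (hU : PreconnectedOn G Uᶜ)
    (hs : s ∈ innerBoundary G U) : PreconnectedOn G (U \ {s})ᶜ := by
  obtain ⟨-, y, hy, hsy⟩ := hs
  have hsub : Uᶜ ⊆ (U \ {s})ᶜ := Set.compl_subset_compl.mpr Set.sdiff_subset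
  refine preconnectedOn_of_subset_reachSet (x := y) fun x hx => ?_
  by_cases hxU : x ∈ U
  · obtain rfl : x = s := by_contra fun hne => hx ⟨hxU, hne⟩
    exact mem_reachSet_of_adj (mem_reachSet_self (hsub hy)) hsy.symm hx
  · exact reachSet_mono hsub (hU y hy x hxU)

theorem finite_compl_reachSet [G.LocallyFinite] (hone : OneEnded G) (hconn : G.Preconnected)
    (hU : U.Finite) (hne : U.Nonempty) {x : V} (hx : (reachSet G Uᶜ x).Infinite) :
    (reachSet G Uᶜ x)ᶜ.Finite := by
  have hcover : (reachSet G Uᶜ x)ᶜ ⊆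
      U ∪ ⋃ y ∈ (⋃ z ∈ U, G.neighborSet z) ∩ {y | (reachSet G Uᶜ y).Finite}, reachSet G Uᶜ y := by
    intro z hz
    refine or_iff_not_imp_left.mpr fun hzU => ?_
    obtain ⟨v, hv⟩ := hne
    obtain ⟨q⟩ := hconn z v
    obtain ⟨d, -, hfst, hsnd⟩ := q.exists_boundary_dart (reachSet G Uᶜ z) (mem_reachSet_self hzU)
      fun h => reachSet_subset h hv
    have hdU : d.snd ∈ U := by
      by_contra h
      exact hsnd (mem_reachSet_of_adj hfst d.adj h)
    have hfin : (reachSet G Uᶜ d.fst).Finite := by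
      by_contra hinf
      exact hz (mem_reachSet_trans (hone.mem_reachSet hU hx hinf) (mem_reachSet_symm hfst))
    simp only [Set.mem_iUnion]
    exact ⟨d.fst, ⟨Set.mem_biUnion hdU d.adj.symm, hfin⟩, mem_reachSet_symm hfst⟩
  refine (hU.union (Set.Finite.biUnion ?_ fun y hy => hy.2)).subset hcover
  exact (hU.biUnion fun z _ => Set.toFinite _).inter_of_left _

theorem exists_finite_superset_preconnectedOn_compl [G.LocallyFinite] (hone : OneEnded G)
    (hconn : G.Preconnected) (hU : U.Finite) (hne : U.Nonempty) :
    ∃ U', U ⊆ U' ∧ U'.Finite ∧ PreconnectedOn G U'ᶜ := by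
  obtain ⟨x, hx⟩ := hone.exists_infinite_reachSet hU
  refine ⟨(reachSet G Uᶜ x)ᶜ, fun y hy h => reachSet_subset h hy,
    finite_compl_reachSet hone hconn hU hne hx, ?_⟩
  rw [compl_compl]
  exact preconnectedOn_reachSet

end InnerBoundary

section Cycles

variable {V : Type*} {G : SimpleGraph V} {v : V} {c : G.Walk v v}

theorem nonempty_diff_pair_of_isCycle {U : Set V} (hc : c.IsCycle)
    (hcU : ∀ x ∈ c.support, x ∈ U) (s t : V) : (U \ {s, t}).Nonempty := by
  classical
  by_contra hempty
  have hsub : c.support.tail.toFinset ⊆ {s, t} := fun x hx => by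
    by_contra hx'
    exact hempty ⟨x, hcU x (List.mem_of_mem_tail (List.mem_toFinset.mp hx)), by simpa using hx'⟩
  have hcard := Finset.card_le_card hsub
  rw [List.toFinset_card_of_nodup hc.support_nodup, List.length_tail, Walk.length_support,
    Nat.add_sub_cancel] at hcard
  exact absurd (hc.three_le_length.trans (hcard.trans Finset.card_le_two)) (by norm_num)

theorem isPeripheral_of_preconnectedOn_compl (hc : c.IsCycle)
    (hchord : ∀ a ∈ c.support, ∀ b ∈ c.support, G.Adj a b → s(a, b) ∈ c.edges)
    (hcompl : PreconnectedOn G {x | x ∈ c.support}ᶜ) : IsPeripheral G c := by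
  refine ⟨hc, hchord, ?_⟩
  rcases Set.eq_empty_or_nonempty {x | x ∉ c.support} with hempty | hne
  · exact Or.inl hempty
  · have := hne.to_subtype
    exact Or.inr ⟨preconnectedOn_iff.mp hcompl⟩

theorem IsPeripheral.preconnectedOn_compl (hc : IsPeripheral G c) :
    PreconnectedOn G {x | x ∈ c.support}ᶜ := by
  rcases hc.2.2 with hempty | hconn
  · intro x hx
    exact (Set.eq_empty_iff_forall_notMem.mp hempty x hx).elim
  · exact preconnectedOn_iff.mpr hconn.preconnected

theorem ncard_support_of_isCycle (hc : c.IsCycle) :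
    {x | x ∈ c.support}.ncard = c.length := by
  classical
  have hsupp : {x | x ∈ c.support} = (c.support.tail.toFinset : Set V) := by
    ext z
    rw [List.coe_toFinset]
    exact ⟨fun hz => (Walk.mem_support_iff c).mp hz |>.elim
      (fun h => h ▸ Walk.end_mem_tail_support hc.not_nil) id, List.mem_of_mem_tail⟩
  rw [hsupp, Set.ncard_coe_finset, List.toFinset_card_of_nodup hc.support_nodup]
  simp

end Cycles

/-- A local system on `G` with fibres `S v`: every edge carries a bijection between the fibres
over its ends, and reversing the edge inverts it. -/
structure LocalSystem {V : Type*} (G : SimpleGraph V) (S : V → Type*) where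
  map : ∀ {u v : V}, G.Adj u v → S u → S v
  map_symm_map : ∀ {u v : V} (h : G.Adj u v) (s : S u), map h.symm (map h s) = s

namespace LocalSystem

variable {V : Type*} {G : SimpleGraph V} {S : V → Type*} (L : LocalSystem G S) {U : Set V}
  {u v w s t p q : V}

/-- The composite of the bijections along the edges of a walk. -/
def transport : ∀ {u v : V}, G.Walk u v → S u → S v
  | _, _, .nil => id
  | _, _, .cons h p => transport p ∘ L.map h

@[simp]
theorem transport_nil : L.transport (.nil : G.Walk u u) = id := rfl

@[simp]
theorem transport_cons (h : G.Adj u v) (p : G.Walk v w) :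
    L.transport (.cons h p) = L.transport p ∘ L.map h := rfl

@[simp]
theorem transport_append (p : G.Walk u v) (q : G.Walk v w) :
    L.transport (p.append q) = L.transport q ∘ L.transport p := by
  induction p with
  | nil => rfl
  | cons h p ih => simp [ih, Function.comp_assoc]

theorem transport_concat (p : G.Walk u v) (h : G.Adj v w) :
    L.transport (p.concat h) = L.map h ∘ L.transport p := by
  simp [Walk.concat_eq_append]

theorem map_symm_comp_map (h : G.Adj u v) : L.map h.symm ∘ L.map h = id :=
  funext (L.map_symm_map h)

theorem transport_reverse_comp (p : G.Walk u v) : L.transport p.reverse ∘ L.transport p = id := by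
  induction p with
  | nil => rfl
  | cons h p ih =>
    rw [Walk.reverse_cons, transport_append, transport_cons, transport_cons, transport_nil]
    calc (id ∘ L.map h.symm) ∘ L.transport p.reverse ∘ L.transport p ∘ L.map h
        = L.map h.symm ∘ (L.transport p.reverse ∘ L.transport p) ∘ L.map h := rfl
      _ = id := by rw [ih, Function.id_comp, map_symm_comp_map]

theorem transport_comp_reverse (p : G.Walk u v) : L.transport p ∘ L.transport p.reverse = id := by
  simpa using L.transport_reverse_comp p.reverse

theorem transport_comp_eq_id_comm {p : G.Walk u v} {q : G.Walk v u}
    (h : L.transport q ∘ L.transport p = id) : L.transport p ∘ L.transport q = id := by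
  have hq : L.transport q = L.transport p.reverse := by
    rw [← Function.comp_id (L.transport q), ← L.transport_comp_reverse p, ← Function.comp_assoc, h,
      Function.id_comp]
  rw [hq, transport_comp_reverse]

theorem transport_eq_id_of_rotate [DecidableEq V] {c : G.Walk v v} (hw : w ∈ c.support)
    (h : L.transport (c.rotate w hw) = id) : L.transport c = id := by
  rw [← c.take_spec hw, transport_append]
  refine L.transport_comp_eq_id_comm ?_
  rwa [Walk.rotate, transport_append] at h

/-- Transport around every closed walk inside `U` is trivial. -/
def IsFlatOn (U : Set V) : Prop :=
  ∀ ⦃v : V⦄ (p : G.Walk v v), (∀ x ∈ p.support, x ∈ U) → L.transport p = id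

variable {L}

theorem IsFlatOn.transport_eq (hL : L.IsFlatOn U) {p q : G.Walk u v} (hp : ∀ x ∈ p.support, x ∈ U)
    (hq : ∀ x ∈ q.support, x ∈ U) : L.transport p = L.transport q := by
  have h : L.transport (q.reverse.append p) = id := hL _ fun x hx => by
    rcases (Walk.mem_support_append_iff _ _).mp hx with hx | hx
    exacts [hq x (by simpa using hx), hp x hx]
  rw [transport_append] at h
  rw [← Function.comp_id (L.transport p), ← L.transport_reverse_comp q, ← Function.comp_assoc, h,
    Function.id_comp]

theorem isFlatOn_of_isCycle (h : ∀ (v : V) (c : G.Walk v v), c.IsCycle →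
    (∀ x ∈ c.support, x ∈ U) → L.transport c = id) : L.IsFlatOn U := by
  classical
  have htriangle {x y : V} (hxy : G.Adj x y) (p : G.Walk y x) (hp : p.IsPath) (hx : x ∈ U)
      (hpU : ∀ z ∈ p.support, z ∈ U) : L.transport p ∘ L.map hxy = id := by
    by_cases he : s(x, y) ∈ p.edges
    · rw [hp.eq_adj_toWalk_of_mem_edges (Sym2.eq_swap ▸ he)]
      exact L.map_symm_comp_map hxy
    · refine h x (.cons hxy p) ((Walk.cons_isCycle_iff _ _).mpr ⟨hp, he⟩) fun z hz => ?_
      rcases List.mem_cons.mp (Walk.support_cons hxy p ▸ hz) with rfl | hz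
      exacts [hx, hpU z hz]
  have hbypass {x y : V} (p : G.Walk x y) (hp : ∀ z ∈ p.support, z ∈ U) :
      L.transport p = L.transport p.bypass := by
    induction p with
    | nil => rfl
    | @cons x y z hxy p ih =>
      simp only [Walk.support_cons, List.forall_mem_cons] at hp
      rw [transport_cons, ih hp.2, Walk.bypass]
      split_ifs with hx
      · nth_rewrite 1 [← Walk.take_spec p.bypass hx]
        rw [transport_append, Function.comp_assoc, htriangle hxy _ (p.bypass_isPath.takeUntil hx)
          hp.1, Function.comp_id]
        exact fun w hw => hp.2 w (p.support_bypass_subset_support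
          (Walk.support_takeUntil_subset_support _ hx hw))
      · rfl
  intro v p hp
  rw [hbypass p hp, Walk.eq_nil_iff_nil.mpr (Walk.isPath_iff_nil.mp p.bypass_isPath), transport_nil]

/-- A walk from `p` to `q` avoiding `s` and `t` cuts the closed walk `a · b · d · e` into one
that avoids `s` and one that avoids `t`. -/
theorem transport_eq_id_of_isFlatOn_diff (hs : L.IsFlatOn (U \ {s})) (ht : L.IsFlatOn (U \ {t}))
    (hconn : PreconnectedOn G (U \ {s, t})) (hp : p ∈ U \ {s, t}) (hq : q ∈ U \ {s, t})
    {a : G.Walk s p} {b : G.Walk p t} {d : G.Walk t q} {e : G.Walk q s}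
    (ha : ∀ x ∈ a.support, x ∈ U \ {t}) (hb : ∀ x ∈ b.support, x ∈ U \ {s})
    (hd : ∀ x ∈ d.support, x ∈ U \ {s}) (he : ∀ x ∈ e.support, x ∈ U \ {t}) :
    L.transport (a.append ((b.append d).append e)) = id := by
  obtain ⟨y, hy⟩ := hconn p hp q hq
  have hbd : L.transport (b.append d) = L.transport y := by
    refine hs.transport_eq (fun x hx => ?_)
      fun x hx => Set.sdiff_subset_sdiff_right (by simp) (hy x hx)
    exact ((Walk.mem_support_append_iff _ _).mp hx).elim (hb x) (hd x)
  have hcut : L.transport (a.append (y.append e)) = id := by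
    refine ht _ fun x hx => ?_
    rcases (Walk.mem_support_append_iff _ _).mp hx with hx | hx
    · exact ha x hx
    rcases (Walk.mem_support_append_iff _ _).mp hx with hx | hx
    · exact Set.sdiff_subset_sdiff_right (by simp) (hy x hx)
    · exact he x hx
  rw [← hcut, transport_append, transport_append _ (b.append d), hbd, ← transport_append,
    ← transport_append]

end LocalSystem

namespace LocalSystem

variable {V : Type*} {G : SimpleGraph V} {S : V → Type*} {L : LocalSystem G S} {U : Set V}
  {s t b v w z : V}

/-- If the cycle meets the boundary of `U` outside two boundary vertices `s` and `t` only between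
them, then it is cut by a walk from `w` to that part avoiding `s` and `t`. -/
theorem transport_eq_id_of_notMem_innerBoundary [Infinite V] (hG : ThreeConnected G)
    (hU : U.Finite) (hflat : ∀ s ∈ innerBoundary G U, L.IsFlatOn (U \ {s})) {c : G.Walk w w}
    (hc : c.IsCycle) (hcU : ∀ x ∈ c.support, x ∈ U) (hbd : ∀ x ∈ innerBoundary G U, x ∈ c.support)
    (hw : w ∉ innerBoundary G U) : L.transport c = id := by
  have hthird (s t : V) : ∃ x ∈ innerBoundary G U, x ≠ s ∧ x ≠ t :=
    hG.exists_innerBoundary_ne hU (nonempty_diff_pair_of_isCycle hc hcU s t)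
  obtain ⟨x₀, hx₀, -⟩ := hthird w w
  obtain ⟨t, ht, P, M, rfl, hP⟩ := exists_eq_append_of_first_mem c ⟨x₀, hbd x₀ hx₀, hx₀⟩
  obtain ⟨s, hs, Q, R, rfl, hR⟩ := exists_eq_append_of_last_mem M ⟨t, M.start_mem_support, ht⟩
  simp only [Walk.mem_support_append_iff] at hcU hbd
  have hwt : w ≠ t := fun h => hw (h ▸ ht)
  have hws : w ≠ s := fun h => hw (h ▸ hs)
  have hQ : Q.IsPath := (hc.isPath_of_append_right (Walk.not_nil_of_ne hwt)).of_append_left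
  have hbdQ {y : V} (hy : y ∈ innerBoundary G U) (hys : y ≠ s) (hyt : y ≠ t) : y ∈ Q.support :=
    ((hbd y hy).resolve_left fun h => hyt (hP y h hy)).resolve_right fun h => hys (hR y h hy)
  obtain ⟨x, hx, hxs, hxt⟩ := hthird s t
  obtain ⟨Q₁, Q₂, rfl⟩ := Walk.mem_support_iff_exists_append.mp (hbdQ hx hxs hxt)
  simp only [Walk.mem_support_append_iff] at hcU
  have hQst {y y' : V} (hy : y ∈ Q₁.support) (hy' : y' ∈ Q₂.support) (hne : y' ≠ x) : y ≠ y' :=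
    hQ.ne_of_mem_support_of_append hne hy hy'
  have hst : s ≠ t := (hQst Q₁.start_mem_support Q₂.end_mem_support hxs.symm).symm
  have hconn : PreconnectedOn G (U \ {s, t}) := by
    refine hG.preconnectedOn_diff_pair hU (preconnectedOn_support_diff_ends hQ) ?_ ?_
    · rintro y ⟨hy, hyts⟩
      exact ⟨hcU y (Or.inr (Or.inl ((Walk.mem_support_append_iff _ _).mp hy))),
        Set.pair_comm t s ▸ hyts⟩
    · rintro y ⟨hy, hyst⟩
      refine ⟨hbdQ hy ?_ ?_, Set.pair_comm t s ▸ hyst⟩ <;> rintro rfl <;> simp at hyst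
  have hcut : L.transport (R.append ((P.append Q₁).append Q₂)) = id := by
    refine transport_eq_id_of_isFlatOn_diff (hflat s hs) (hflat t ht) hconn
      ⟨hcU w (by simp), by simp [hws, hwt]⟩ ⟨hx.1, by simp [hxs, hxt]⟩ ?_ ?_ ?_ ?_
    · exact fun y hy => ⟨hcU y (by tauto), fun h => hst (hR t (h ▸ hy) ht).symm⟩
    · exact fun y hy => ⟨hcU y (by tauto), fun h => hst (hP s (h ▸ hy) hs)⟩
    · exact fun y hy => ⟨hcU y (by tauto), hQst hy Q₂.end_mem_support hxs.symm⟩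
    · refine fun y hy => ⟨hcU y (by tauto), ?_⟩
      rintro rfl
      exact hxt (by_contra fun hne => hQst Q₁.start_mem_support hy (Ne.symm hne) rfl)
  rw [← Walk.append_assoc, transport_append] at hcut
  simpa only [transport_append, Function.comp_assoc] using L.transport_comp_eq_id_comm hcut

/-- If the whole cycle `s · Q · s` lies on the boundary of `U` and has a chord `s b`, then its
first edge `s t` may be replaced by a walk from `s` to `t` starting with the chord, after which a
walk from `b` to the last vertex `z` of `Q` avoiding `s` and `t` cuts it. -/
theorem transport_eq_id_of_chord [Infinite V] (hG : ThreeConnected G) (hU : U.Finite)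
    (hflat : ∀ s ∈ innerBoundary G U, L.IsFlatOn (U \ {s})) (hst : G.Adj s t) {Q : G.Walk t z}
    (hzs : G.Adj z s) (hQ : Q.IsPath) (hsQ : s ∉ Q.support)
    (hbd : ∀ x, x ∈ innerBoundary G U ↔ x = s ∨ x ∈ Q.support) (hzt : z ≠ t) (hsb : G.Adj s b)
    (hbU : b ∈ U) (hbt : b ≠ t) (hbz : b ≠ z) :
    L.transport (.cons hst (Q.concat hzs)) = id := by
  have hs : s ∈ innerBoundary G U := (hbd s).mpr (Or.inl rfl)
  have hQbd (y : V) (hy : y ∈ Q.support) : y ∈ innerBoundary G U := (hbd y).mpr (Or.inr hy)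
  have hQs (y : V) (hy : y ∈ Q.support) : y ≠ s := fun h => hsQ (h ▸ hy)
  have hconn (r : V) (hr : PreconnectedOn G ({x | x ∈ Q.support} \ {r})) :
      PreconnectedOn G (U \ {s, r}) := by
    refine hG.preconnectedOn_diff_pair hU hr (fun y ⟨hy, hyr⟩ => ⟨(hQbd y hy).1, ?_⟩)
      fun y ⟨hy, hysr⟩ => ⟨((hbd y).mp hy).resolve_left ?_, ?_⟩
    · simpa [hQs y hy] using hyr
    · rintro rfl; simp at hysr
    · rintro rfl; simp at hysr
  obtain ⟨Y, hY⟩ := hconn z (preconnectedOn_support_diff_end hQ) b ⟨hbU, by simp [hsb.ne', hbz]⟩ t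
    ⟨(hQbd t Q.start_mem_support).1, by simp [hst.ne', hzt.symm]⟩
  have hreplace : L.transport (.cons hst .nil) = L.transport (.cons hsb Y) := by
    refine (hflat z (hQbd z Q.end_mem_support)).transport_eq (fun x hx => ?_) fun x hx => ?_
    · rcases (by simpa using hx : x = s ∨ x = t) with rfl | rfl
      exacts [⟨hs.1, hzs.ne'⟩, ⟨(hQbd x Q.start_mem_support).1, hzt.symm⟩]
    · rcases List.mem_cons.mp (Walk.support_cons hsb Y ▸ hx) with rfl | hx
      exacts [⟨hs.1, hzs.ne'⟩, Set.sdiff_subset_sdiff_right (by simp) (hY x hx)]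
  have hcut : L.transport ((Walk.cons hsb .nil).append ((Y.append Q).append (.cons hzs .nil))) =
      id := by
    refine transport_eq_id_of_isFlatOn_diff (hflat s hs) (hflat t (hQbd t Q.start_mem_support))
      (hconn t (preconnectedOn_support_diff_start hQ)) ⟨hbU, by simp [hsb.ne', hbt]⟩
      ⟨(hQbd z Q.end_mem_support).1, by simp [hzs.ne, hzt]⟩ (fun x hx => ?_)
      (fun x hx => Set.sdiff_subset_sdiff_right (by simp) (hY x hx))
      (fun x hx => ⟨(hQbd x hx).1, hQs x hx⟩) fun x hx => ?_
    · rcases (by simpa using hx : x = s ∨ x = b) with rfl | rfl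
      exacts [⟨hs.1, hst.ne⟩, ⟨hbU, hbt⟩]
    · rcases (by simpa using hx : x = z ∨ x = s) with rfl | rfl
      exacts [⟨(hQbd x Q.end_mem_support).1, hzt⟩, ⟨hs.1, hst.ne⟩]
  rw [← hcut]
  have hsplit : Walk.cons hst (Q.concat hzs) =
      (Walk.cons hst .nil).append (Q.append (.cons hzs .nil)) := by
    rw [Walk.concat_eq_append]; rfl
  rw [hsplit, transport_append, hreplace]
  simp only [transport_append, transport_cons, transport_nil, Function.comp_assoc,
    Function.id_comp]

theorem transport_eq_id_of_exists_chord [Infinite V] (hG : ThreeConnected G) (hU : U.Finite)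
    (hflat : ∀ s ∈ innerBoundary G U, L.IsFlatOn (U \ {s})) {c : G.Walk s s} (hc : c.IsCycle)
    (hbd : ∀ x, x ∈ innerBoundary G U ↔ x ∈ c.support) (hsb : G.Adj s b) (hbU : b ∈ U)
    (hchord : s(s, b) ∉ c.edges) : L.transport c = id := by
  cases c with
  | nil => rfl
  | @cons s t _ hst p =>
    obtain ⟨z, Q, hzs, rfl⟩ : ∃ (z : V) (Q : G.Walk t z) (hzs : G.Adj z s), p = Q.concat hzs := by
      cases p with
      | nil => exact absurd rfl hst.ne
      | cons h q => exact Walk.exists_cons_eq_concat h q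
    obtain ⟨hp, hst_edge⟩ := (Walk.cons_isCycle_iff _ _).mp hc
    obtain ⟨hQ, hsQ⟩ := Walk.concat_isPath_iff _ |>.mp hp
    refine transport_eq_id_of_chord hG hU hflat hst hzs hQ hsQ (fun x => ?_) ?_ hsb hbU ?_ ?_
    · rw [hbd, Walk.support_cons, Walk.support_concat]
      simp only [List.mem_cons, List.mem_append, List.not_mem_nil]
      tauto
    · rintro rfl
      exact hst_edge (by simp [Walk.edges_concat, Sym2.eq_swap])
    · rintro rfl
      exact hchord (by simp)
    · rintro rfl
      exact hchord (by simp [Walk.edges_concat, Sym2.eq_swap])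

theorem isFlatOn_of_diff_singleton [Infinite V] (hG : ThreeConnected G)
    (hper : ∀ (v : V) (c : G.Walk v v), IsPeripheral G c → L.transport c = id) (hU : U.Finite)
    (hUc : PreconnectedOn G Uᶜ) (hflat : ∀ s ∈ innerBoundary G U, L.IsFlatOn (U \ {s})) :
    L.IsFlatOn U := by
  classical
  refine isFlatOn_of_isCycle fun v c hc hcU => ?_
  by_cases hmiss : ∃ s ∈ innerBoundary G U, s ∉ c.support
  · obtain ⟨s, hs, hsc⟩ := hmiss
    exact hflat s hs c fun x hx => ⟨hcU x hx, fun h => hsc (h ▸ hx)⟩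
  push Not at hmiss
  by_cases hinner : ∃ w ∈ c.support, w ∉ innerBoundary G U
  · obtain ⟨w, hwc, hw⟩ := hinner
    refine L.transport_eq_id_of_rotate hwc <|
      transport_eq_id_of_notMem_innerBoundary hG hU hflat (hc.rotate hwc) ?_ ?_ hw <;>
      simpa only [Walk.mem_support_rotate_iff]
  push Not at hinner
  by_cases hchord : ∃ s ∈ c.support, ∃ b ∈ U, G.Adj s b ∧ s(s, b) ∉ c.edges
  · obtain ⟨s, hsc, b, hbU, hsb, hb⟩ := hchord
    refine L.transport_eq_id_of_rotate hsc <|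
      transport_eq_id_of_exists_chord hG hU hflat (hc.rotate hsc) (fun x => ?_) hsb hbU
        fun h => hb ((c.rotate_edges s hsc).perm.mem_iff.mp h)
    rw [Walk.mem_support_rotate_iff]
    exact ⟨hmiss x, hinner x⟩
  push Not at hchord
  have hUeq : {x | x ∈ c.support} = U := by
    refine Set.Subset.antisymm hcU fun x₀ hx₀ => by_contra fun hx₀c => ?_
    obtain ⟨x, ⟨hxU, hxc⟩, y, hy, hxy, -⟩ :=
      hG.exists_adj_notMem (hU.sdiff (t := {x | x ∈ c.support})) ⟨x₀, hx₀, hx₀c⟩ x₀ x₀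
    by_cases hyc : y ∈ c.support
    · exact hxc (c.snd_mem_support_of_mem_edges (hchord y hyc x hxU hxy.symm))
    · exact hxc (hmiss x ⟨hxU, y, fun hyU => hy ⟨hyU, hyc⟩, hxy⟩)
  exact hper v c <| isPeripheral_of_preconnectedOn_compl hc
    (fun a ha b hb => hchord a ha b (hcU b hb)) (hUeq ▸ hUc)

theorem isFlatOn_of_finite [Infinite V] (hG : ThreeConnected G)
    (hper : ∀ (v : V) (c : G.Walk v v), IsPeripheral G c → L.transport c = id) (hU : U.Finite)
    (hUc : PreconnectedOn G Uᶜ) : L.IsFlatOn U := by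
  induction hn : U.ncard using Nat.strong_induction_on generalizing U with
  | _ n ih =>
    subst hn
    refine isFlatOn_of_diff_singleton hG hper hU hUc fun s hs => ?_
    exact ih _ (Set.ncard_sdiff_singleton_lt_of_mem hs.1 hU) hU.sdiff
      (hUc.compl_diff_singleton hs) rfl

theorem isFlatOn_univ_of_isPeripheral [G.LocallyFinite] (hone : OneEnded G)
    (hG : ThreeConnected G)
    (hper : ∀ (v : V) (c : G.Walk v v), IsPeripheral G c → L.transport c = id) :
    L.IsFlatOn Set.univ := by
  have := hone.infinite
  intro v p _
  obtain ⟨U, hpU, hU, hUc⟩ := exists_finite_superset_preconnectedOn_compl hone hG.preconnected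
    (List.finite_toSet p.support) ⟨v, p.start_mem_support⟩
  exact isFlatOn_of_finite hG hper hU hUc p hpU

theorem IsFlatOn.exists_section (hL : L.IsFlatOn Set.univ) (hconn : G.Preconnected) {o : V}
    (s : S o) : ∃ F : ∀ v, S v, ∀ ⦃u v⦄ (h : G.Adj u v), L.map h (F u) = F v := by
  let p (v : V) : G.Walk o v := (hconn o v).some
  refine ⟨fun v => L.transport (p v) s, fun u v h => ?_⟩
  have hpv : L.transport ((p u).concat h) = L.transport (p v) :=
    hL.transport_eq (fun _ _ => trivial) fun _ _ => trivial
  rw [transport_concat] at hpv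
  exact congrFun hpv s

end LocalSystem

section PeripheralSets

variable {V : Type*} {G : SimpleGraph V} {X X₁ X₂ X₃ : Set V} {u v x y : V}

/-- `X` is the vertex set of a peripheral cycle. Peripheral cycles are chordless, so the cycle is
determined by `X`; working with `X` avoids choosing a starting vertex and an orientation. -/
def IsPeripheralSet (G : SimpleGraph V) (X : Set V) : Prop :=
  ∃ (v : V) (c : G.Walk v v), IsPeripheral G c ∧ {x | x ∈ c.support} = X

namespace IsPeripheralSet

theorem preconnectedOn_compl (hX : IsPeripheralSet G X) : PreconnectedOn G Xᶜ := by
  obtain ⟨v, c, hc, rfl⟩ := hX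
  exact hc.preconnectedOn_compl

theorem preconnectedOn (hX : IsPeripheralSet G X) : PreconnectedOn G X := by
  obtain ⟨v, c, -, rfl⟩ := hX
  exact preconnectedOn_support c

theorem finite (hX : IsPeripheralSet G X) : X.Finite := by
  obtain ⟨v, c, -, rfl⟩ := hX
  exact c.support.finite_toSet

theorem nonempty_diff_pair (hX : IsPeripheralSet G X) (s t : V) : (X \ {s, t}).Nonempty := by
  obtain ⟨v, c, hc, rfl⟩ := hX
  exact nonempty_diff_pair_of_isCycle hc.1 (fun _ => id) s t

theorem exists_cycle_at (hX : IsPeripheralSet G X) (hx : x ∈ X) :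
    ∃ c : G.Walk x x, c.IsCycle ∧ (∀ z, z ∈ X ↔ z ∈ c.support) ∧
      ∀ a ∈ X, ∀ b ∈ X, G.Adj a b → s(a, b) ∈ c.edges := by
  classical
  obtain ⟨v, c, ⟨hc, hchord, -⟩, rfl⟩ := hX
  refine ⟨c.rotate x hx, hc.rotate hx, fun z => (Walk.mem_support_rotate_iff c x hx).symm, ?_⟩
  intro a ha b hb hab
  exact (c.rotate_edges x hx).perm.mem_iff.mpr (hchord a ha b hb hab)

theorem ncard_neighbors (hX : IsPeripheralSet G X) (hx : x ∈ X) :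
    {y | y ∈ X ∧ G.Adj x y}.ncard = 2 := by
  obtain ⟨c, hc, hXc, hchord⟩ := hX.exists_cycle_at hx
  rw [← hc.ncard_neighborSet_toSubgraph_eq_two c.start_mem_support]
  congr 1
  ext y
  rw [Subgraph.mem_neighborSet, ← Subgraph.mem_edgeSet, Walk.mem_edges_toSubgraph]
  exact ⟨fun h => hchord x hx y h.1 h.2,
    fun h => ⟨(hXc y).mpr (c.snd_mem_support_of_mem_edges h), c.adj_of_mem_edges h⟩⟩

theorem mem_edges_of_isCycle (hX : IsPeripheralSet G X) {c : G.Walk v v} (hc : c.IsCycle)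
    (hcX : ∀ z ∈ c.support, z ∈ X) (hx : x ∈ c.support) (hy : y ∈ X) (hxy : G.Adj x y) :
    s(x, y) ∈ c.edges := by
  have hsub : c.toSubgraph.neighborSet x ⊆ {y | y ∈ X ∧ G.Adj x y} := by
    intro z hz
    refine ⟨hcX z ?_, c.toSubgraph.adj_sub hz⟩
    exact (Walk.mem_verts_toSubgraph c).mp (c.toSubgraph.edge_vert (Subgraph.Adj.symm hz))
  have heq := Set.eq_of_subset_of_ncard_le hsub
    (by rw [hc.ncard_neighborSet_toSubgraph_eq_two hx, hX.ncard_neighbors (hcX x hx)])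
    (hX.finite.subset fun _ h => h.1)
  have hmem : y ∈ c.toSubgraph.neighborSet x := heq ▸ ⟨hy, hxy⟩
  rwa [← Walk.mem_edges_toSubgraph, Subgraph.mem_edgeSet]

theorem subset_support_of_isCycle (hX : IsPeripheralSet G X) {c : G.Walk v v} (hc : c.IsCycle)
    (hcX : ∀ z ∈ c.support, z ∈ X) : ∀ z ∈ X, z ∈ c.support :=
  hX.preconnectedOn.subset_of_adj_closed (T := {z | z ∈ c.support})
    (hcX v c.start_mem_support) c.start_mem_support fun _ ha _ _ hb hab =>
      c.snd_mem_support_of_mem_edges (hX.mem_edges_of_isCycle hc hcX ha hb hab)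

theorem eq_of_subset (hX₁ : IsPeripheralSet G X₁) (hX₂ : IsPeripheralSet G X₂) (h : X₁ ⊆ X₂) :
    X₁ = X₂ := by
  obtain ⟨v, c, hc, rfl⟩ := hX₁
  exact h.antisymm (hX₂.subset_support_of_isCycle hc.1 h)

end IsPeripheralSet

theorem isCycle_append_comm {p : G.Walk x y} {q : G.Walk y x} (h : (p.append q).IsCycle) :
    (q.append p).IsCycle := by
  rw [Walk.isCycle_def] at h ⊢
  obtain ⟨htrail, hne, hnodup⟩ := h
  refine ⟨?_, fun hnil => hne ?_, ?_⟩
  · rw [Walk.isTrail_def, Walk.edges_append] at htrail ⊢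
    exact List.perm_append_comm.nodup htrail
  · have hlen := congrArg Walk.length hnil
    simp only [Walk.length_append, Walk.length_nil] at hlen
    exact (Walk.length_eq_zero_iff.mp (by rw [Walk.length_append]; omega)).eq_nil
  · rw [Walk.tail_support_append] at hnodup ⊢
    exact List.perm_append_comm.nodup hnodup

theorem exists_mem_support_ne_ne {p : G.Walk x y} (hne : x ≠ y) (hxy : ¬ G.Adj x y) :
    ∃ z ∈ p.support, z ≠ x ∧ z ≠ y := by
  cases p with
  | nil => exact (hne rfl).elim
  | @cons _ z _ h q =>
    exact ⟨z, by simp, h.ne', fun hzy => hxy (hzy ▸ h)⟩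

/-- The cycle with vertex set `X` is the union of the paths `P` and `P'`, which meet only in their
common ends, and is chordless. -/
structure IsArcPair (X : Set V) (P P' : G.Walk x y) : Prop where
  isPath_left : P.IsPath
  isPath_right : P'.IsPath
  eq_or_eq : ∀ z ∈ P.support, z ∈ P'.support → z = x ∨ z = y
  mem_iff : ∀ z, z ∈ X ↔ z ∈ P.support ∨ z ∈ P'.support
  mem_edges : ∀ a ∈ X, ∀ b ∈ X, G.Adj a b → s(a, b) ∈ P.edges ∨ s(a, b) ∈ P'.edges

theorem isArcPair_of_isCycle {P : G.Walk x y} {Q : G.Walk y x} (hc : (P.append Q).IsCycle)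
    (hne : x ≠ y) (hX : ∀ z, z ∈ X ↔ z ∈ (P.append Q).support)
    (hchord : ∀ a ∈ X, ∀ b ∈ X, G.Adj a b → s(a, b) ∈ (P.append Q).edges) :
    IsArcPair X P Q.reverse where
  isPath_left := hc.isPath_of_append_left (Walk.not_nil_of_ne hne.symm)
  isPath_right := (hc.isPath_of_append_right (Walk.not_nil_of_ne hne)).reverse
  eq_or_eq z hzP hzQ := by
    rw [Walk.support_reverse, List.mem_reverse] at hzQ
    have hnodup := hc.support_nodup
    rw [Walk.tail_support_append] at hnodup
    by_contra! hz
    refine List.disjoint_of_nodup_append hnodup (a := z) ?_ ?_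
    · exact ((Walk.mem_support_iff P).mp hzP).resolve_left hz.1
    · exact ((Walk.mem_support_iff Q).mp hzQ).resolve_left hz.2
  mem_iff z := by simp [hX, Walk.mem_support_append_iff]
  mem_edges a ha b hb hab := by simpa [Walk.edges_append] using hchord a ha b hb hab

namespace IsArcPair

variable {P P' : G.Walk x y}

theorem symm (h : IsArcPair X P P') : IsArcPair X P' P where
  isPath_left := h.isPath_right
  isPath_right := h.isPath_left
  eq_or_eq z hz hz' := h.eq_or_eq z hz' hz
  mem_iff z := (h.mem_iff z).trans or_comm
  mem_edges a ha b hb hab := (h.mem_edges a ha b hb hab).symm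

theorem not_adj {a b : V} (h : IsArcPair X P P') (ha : a ∈ P.support) (hax : a ≠ x) (hay : a ≠ y)
    (hb : b ∈ P'.support) (hbx : b ≠ x) (hby : b ≠ y) : ¬ G.Adj a b := by
  intro hab
  rcases h.mem_edges a ((h.mem_iff a).mpr (.inl ha)) b ((h.mem_iff b).mpr (.inr hb)) hab
    with he | he
  · exact (h.eq_or_eq b (P.snd_mem_support_of_mem_edges he) hb).elim hbx hby
  · exact (h.eq_or_eq a ha (P'.fst_mem_support_of_mem_edges he)).elim hax hay

end IsArcPair

theorem IsPeripheralSet.exists_isArcPair (hX : IsPeripheralSet G X) (hx : x ∈ X) (hy : y ∈ X)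
    (hne : x ≠ y) : ∃ P P' : G.Walk x y, IsArcPair X P P' := by
  obtain ⟨c, hc, hXc, hchord⟩ := hX.exists_cycle_at hx
  obtain ⟨P, Q, rfl⟩ := Walk.mem_support_iff_exists_append.mp ((hXc y).mp hy)
  exact ⟨P, Q.reverse, isArcPair_of_isCycle hc hne hXc hchord⟩

theorem IsPeripheralSet.exists_ear (hX₂ : IsPeripheralSet G X₂) {q a b : V} (hq : q ∈ X₂)
    (hqX₁ : q ∉ X₁) (ha : a ∈ X₁ ∩ X₂) (hb : b ∈ X₁ ∩ X₂) (hab : a ≠ b) :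
    ∃ (x y : V) (M N : G.Walk x y), x ∈ X₁ ∧ y ∈ X₁ ∧ x ≠ y ∧ IsArcPair X₂ M N ∧
      q ∈ M.support ∧ ∀ z ∈ M.support, z ∈ X₁ → z = x ∨ z = y := by
  obtain ⟨c, hc, hXc, hchord⟩ := hX₂.exists_cycle_at hq
  obtain ⟨y, hy, M₂, N', rfl, hM₂⟩ :=
    exists_eq_append_of_first_mem c ⟨a, (hXc a).mp ha.2, ha.1⟩
  obtain ⟨x, hx, N, M₁, rfl, hM₁⟩ :=
    exists_eq_append_of_last_mem N' ⟨y, N'.start_mem_support, hy⟩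
  have hqy : q ≠ y := fun h => hqX₁ (h ▸ hy)
  have hN : N.IsPath := (hc.isPath_of_append_right (Walk.not_nil_of_ne hqy)).of_append_left
  have hxy : x ≠ y := by
    rintro rfl
    obtain rfl := (Walk.isPath_iff_nil.mp hN).eq_nil
    have huniq : ∀ z ∈ X₁ ∩ X₂, z = x := by
      rintro z ⟨hz₁, hz₂⟩
      rw [hXc, Walk.nil_append, Walk.mem_support_append_iff] at hz₂
      exact hz₂.elim (hM₂ z · hz₁) (hM₁ z · hz₁)
    exact hab ((huniq a ha).trans (huniq b hb).symm)
  have hc' : ((M₁.append M₂).append N).IsCycle := by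
    rw [← Walk.append_assoc]
    apply isCycle_append_comm
    rwa [← Walk.append_assoc]
  refine ⟨x, y, M₁.append M₂, N.reverse, hx, hy, hxy, isArcPair_of_isCycle hc' hxy ?_ ?_, ?_, ?_⟩
  · intro z
    simp only [hXc, Walk.mem_support_append_iff]
    tauto
  · intro a ha b hb hab
    have := hchord a ha b hb hab
    simp only [Walk.edges_append, List.mem_append] at this ⊢
    tauto
  · simp [Walk.mem_support_append_iff]
  · intro z hz hz₁
    exact ((Walk.mem_support_append_iff _ _).mp hz).imp (hM₁ z · hz₁) (hM₂ z · hz₁)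

end PeripheralSets

section PeripheralSets

variable {V : Type*} {G : SimpleGraph V} {X X₁ X₂ X₃ : Set V} {u v x y : V}

theorem PreconnectedOn.exists_path_between {S A B : Set V} (hS : PreconnectedOn G S)
    (hA : (A ∩ S).Nonempty) (hB : (B ∩ S).Nonempty) :
    ∃ a ∈ A, ∃ b ∈ B, ∃ p : G.Walk a b, p.IsPath ∧ (∀ z ∈ p.support, z ∈ S) ∧
      (∀ z ∈ p.support, z ∈ A → z = a) ∧ ∀ z ∈ p.support, z ∈ B → z = b := by
  classical
  obtain ⟨a₀, ha₀A, ha₀S⟩ := hA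
  obtain ⟨b₀, hb₀B, hb₀S⟩ := hB
  obtain ⟨w, hw⟩ := hS a₀ ha₀S b₀ hb₀S
  obtain ⟨a, haA, w₁, w₂, rfl, hlast⟩ := exists_eq_append_of_last_mem w ⟨a₀, by simp, ha₀A⟩
  obtain ⟨b, hbB, p, w₃, rfl, hfirst⟩ := exists_eq_append_of_first_mem w₂ ⟨b₀, by simp, hb₀B⟩
  have hsub : ∀ z ∈ p.bypass.support, z ∈ p.support := fun z hz =>
    p.support_bypass_subset_support hz
  simp only [Walk.mem_support_append_iff] at hw hlast
  exact ⟨a, haA, b, hbB, p.bypass, p.bypass_isPath, fun z hz => hw z (.inr (.inl (hsub z hz))),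
    fun z hz => hlast z (.inl (hsub z hz)), fun z hz => hfirst z (hsub z hz)⟩

theorem notMem_support_of_isPath_append {p : G.Walk u x} {q : G.Walk x v}
    (h : (p.append q).IsPath) : (u ≠ x → u ∉ q.support) ∧ (v ≠ x → v ∉ p.support) :=
  ⟨fun hne hu => h.ne_of_mem_support_of_append hne p.start_mem_support hu rfl,
    fun hne hv => h.ne_of_mem_support_of_append hne hv q.end_mem_support rfl⟩

theorem IsArcPair.false_of_crossing_append (A : AngleSystem G) {a b r q : V}
    {P₁ : G.Walk x a} {P₂ : G.Walk a y} {P₁' : G.Walk x b} {P₂' : G.Walk b y}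
    (h : IsArcPair X (P₁.append P₂) (P₁'.append P₂'))
    (hax : a ≠ x) (hay : a ≠ y) (hbx : b ≠ x) (hby : b ≠ y)
    (har : G.Adj a r) (R : G.Walk r b) (hrX : r ∉ X) (hR : ∀ z ∈ R.support, z ∈ X → z = b)
    (M₁ : G.Walk x q) (M₂ : G.Walk q y) (hM₁ : ∀ z ∈ M₁.support, z ∈ X → z = x)
    (hM₂ : ∀ z ∈ M₂.support, z ∈ X → z = y)
    (hRM : ∀ z ∈ (Walk.cons har R).support, z ∉ M₁.support ∧ z ∉ M₂.support)
    (K : G.Walk r q) (hK : ∀ z ∈ K.support, z ∉ X) : False := by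
  obtain ⟨hxP₂, hyP₁⟩ := notMem_support_of_isPath_append h.isPath_left
  obtain ⟨hxP₂', hyP₁'⟩ := notMem_support_of_isPath_append h.isPath_right
  have hX := h.mem_iff
  have hmeet := h.eq_or_eq
  simp only [Walk.mem_support_append_iff] at hX hmeet
  have ha : a ∈ P₁.support := P₁.end_mem_support
  have hb : b ∈ P₁'.support := P₁'.end_mem_support
  have hrR : r ∈ R.support := R.start_mem_support
  apply A.false_of_subdivision_K₃₃ P₁.reverse P₁' P₂ P₂'.reverse (Walk.cons har .nil) R M₁
    M₂.reverse K <;>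
  · intro z hz hz'
    simp only [Walk.support_reverse, List.mem_reverse, Walk.mem_support_append_iff,
      Walk.support_cons, Walk.support_nil, List.mem_cons, List.not_mem_nil, or_false] at hz hz' hRM
    grind

/-- Contracting the complement of `X` to a point turns the theta graph `P ∪ P' ∪ M` together with
the path `W` crossing it into a subdivision of `K₃,₃`. -/
theorem IsArcPair.false_of_crossing (A : AngleSystem G) {P P' M : G.Walk x y} {a b : V}
    (h : IsArcPair X P P') (hXc : PreconnectedOn G Xᶜ) (hne : x ≠ y) (hxy : ¬ G.Adj x y)
    (hM : M.IsPath) (hMX : ∀ z ∈ M.support, z ∈ X → z = x ∨ z = y)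
    (ha : a ∈ P.support) (hax : a ≠ x) (hay : a ≠ y)
    (hb : b ∈ P'.support) (hbx : b ≠ x) (hby : b ≠ y)
    (W : G.Walk a b) (hW : W.IsPath) (hWM : ∀ z ∈ W.support, z ∉ M.support)
    (hWX : ∀ z ∈ W.support, z ∈ X → z = a ∨ z = b) : False := by
  have hab := h.not_adj ha hax hay hb hbx hby
  obtain ⟨q, hq, hqx, hqy⟩ := exists_mem_support_ne_ne (p := M) hne hxy
  have hqX : q ∉ X := fun hqX => (hMX q hq hqX).elim hqx hqy
  obtain ⟨P₁, P₂, rfl⟩ := Walk.mem_support_iff_exists_append.mp ha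
  obtain ⟨P₁', P₂', rfl⟩ := Walk.mem_support_iff_exists_append.mp hb
  obtain ⟨M₁, M₂, rfl⟩ := Walk.mem_support_iff_exists_append.mp hq
  obtain ⟨hxM₂, hyM₁⟩ := notMem_support_of_isPath_append hM
  simp only [Walk.mem_support_append_iff, not_or] at hMX hWM
  cases W with
  | nil => exact (h.eq_or_eq a ha hb).elim hax hay
  | @cons _ r _ har R =>
    obtain ⟨-, haR⟩ := (Walk.cons_isPath_iff _ _).mp hW
    have hR : ∀ z ∈ R.support, z ∈ X → z = b := fun z hz hzX =>
      (hWX z (by simp [hz]) hzX).resolve_left fun hza => haR (hza ▸ hz)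
    have hrX : r ∉ X := fun hrX => hab (hR r R.start_mem_support hrX ▸ har)
    obtain ⟨K, hK⟩ := hXc r hrX q hqX
    refine h.false_of_crossing_append A hax hay hbx hby har R hrX hR M₁ M₂ ?_ ?_ hWM K hK
    · exact fun z hz hzX => (hMX z (.inl hz) hzX).resolve_right fun hzy =>
        hyM₁ hqy.symm (hzy ▸ hz)
    · exact fun z hz hzX => (hMX z (.inr hz) hzX).resolve_left fun hzx =>
        hxM₂ hqx.symm (hzx ▸ hz)

theorem ThreeConnected.false_of_two_isArcPair (hG : ThreeConnected G) (A : AngleSystem G)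
    {P P' M : G.Walk x y} (h₁ : IsArcPair X₁ P P') (h₂ : IsArcPair X₂ P M)
    (hX₁ : PreconnectedOn G X₁ᶜ) (hX₂ : PreconnectedOn G X₂ᶜ)
    (hP'M : ∀ z ∈ P'.support, z ∈ M.support → z = x ∨ z = y) (hne : x ≠ y)
    (hxy : ¬ G.Adj x y) : False := by
  obtain ⟨p, hp, hpx, hpy⟩ := exists_mem_support_ne_ne (p := P) hne hxy
  obtain ⟨p', hp', hp'x, hp'y⟩ := exists_mem_support_ne_ne (p := P') hne hxy
  obtain ⟨a, ⟨ha, hax, hay⟩, b, ⟨hb, hbx, hby⟩, W, hW, hWxy, hWa, hWb⟩ :=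
    (hG.preconnectedOn_compl_pair x y).exists_path_between
      (A := {z | z ∈ P.support ∧ z ≠ x ∧ z ≠ y})
      (B := {z | (z ∈ P'.support ∨ z ∈ M.support) ∧ z ≠ x ∧ z ≠ y})
      ⟨p, ⟨hp, hpx, hpy⟩, by simp [hpx, hpy]⟩ ⟨p', ⟨.inl hp', hp'x, hp'y⟩, by simp [hp'x, hp'y]⟩
  have hWne : ∀ z ∈ W.support, z ≠ x ∧ z ≠ y := fun z hz => by simpa using hWxy z hz
  have hcross {Y Y' : Set V} {Q N : G.Walk x y} (hQ : IsArcPair Y P Q) (hN : IsArcPair Y' P N)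
      (hY : PreconnectedOn G Yᶜ) (hQN : ∀ z ∈ Q.support, z ∈ N.support → z = x ∨ z = y)
      (hbQ : b ∈ Q.support)
      (hb' : ∀ z ∈ W.support, z ∈ Q.support ∨ z ∈ N.support → z = b) : False := by
    refine hQ.false_of_crossing A hY hne hxy hN.isPath_right ?_ ha hax hay hbQ hbx hby W hW ?_ ?_
    · exact fun z hz hzY => ((hQ.mem_iff z).mp hzY).elim (hN.eq_or_eq z · hz) (hQN z · hz)
    · intro z hz hzN
      obtain rfl := hb' z hz (.inr hzN)
      exact (hQN z hbQ hzN).elim hbx hby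
    · exact fun z hz hzY => ((hQ.mem_iff z).mp hzY).imp (fun h => hWa z hz ⟨h, hWne z hz⟩)
        fun h => hb' z hz (.inl h)
  rcases hb with hb | hb
  · exact hcross h₁ h₂ hX₁ hP'M hb fun z hz h => hWb z hz ⟨h, hWne z hz⟩
  · exact hcross h₂ h₁ hX₂ (fun z hz hz' => hP'M z hz' hz) hb
      fun z hz h => hWb z hz ⟨h.symm, hWne z hz⟩

theorem IsArcPair.adj_of_notMem (A : AngleSystem G) {P P' M : G.Walk x y}
    (h : IsArcPair X₁ P P') (hX₁ : PreconnectedOn G X₁ᶜ) (hX₂ : PreconnectedOn G X₂ᶜ)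
    (hne : x ≠ y) (hM : M.IsPath) (hMX₂ : ∀ z ∈ M.support, z ∈ X₂)
    (hMX₁ : ∀ z ∈ M.support, z ∈ X₁ → z = x ∨ z = y)
    (hP : ∃ z ∈ P.support, z ∉ X₂) (hP' : ∃ z ∈ P'.support, z ∉ X₂) : G.Adj x y := by
  by_contra hxy
  have hends : ∀ z ∉ X₂, z ≠ x ∧ z ≠ y := fun z hz =>
    ⟨fun hzx => hz (hzx ▸ hMX₂ x M.start_mem_support),
      fun hzy => hz (hzy ▸ hMX₂ y M.end_mem_support)⟩
  obtain ⟨p, hp, hpX⟩ := hP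
  obtain ⟨p', hp', hp'X⟩ := hP'
  obtain ⟨a, ⟨ha, hax, hay⟩, b, ⟨hb, hbx, hby⟩, W, hW, hWX, hWa, hWb⟩ := hX₂.exists_path_between
    (A := {z | z ∈ P.support ∧ z ≠ x ∧ z ≠ y}) (B := {z | z ∈ P'.support ∧ z ≠ x ∧ z ≠ y})
    ⟨p, ⟨hp, hends p hpX⟩, hpX⟩ ⟨p', ⟨hp', hends p' hp'X⟩, hp'X⟩
  exact h.false_of_crossing A hX₁ hne hxy hM hMX₁ ha hax hay hb hbx hby W hW
    (fun z hz hzM => hWX z hz (hMX₂ z hzM)) fun z hz hzX => ((h.mem_iff z).mp hzX).imp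
      (fun h => hWa z hz ⟨h, hends z (hWX z hz)⟩) fun h => hWb z hz ⟨h, hends z (hWX z hz)⟩

theorem isCycle_append_reverse {P P' : G.Walk x y} (hP : P.IsPath) (hP' : P'.IsPath)
    (hmeet : ∀ z ∈ P.support, z ∈ P'.support → z = x ∨ z = y) (hne : x ≠ y)
    (hxy : ¬ G.Adj x y) : (P.append P'.reverse).IsCycle := by
  have hstart {u v : V} {p : G.Walk u v} (hp : p.IsPath) : u ∉ p.support.tail :=
    (List.nodup_cons.mp (p.cons_tail_support ▸ hp.support_nodup)).1
  refine hP.isCycle_append hP'.reverse (fun z hz hz' => ?_) (.inl ?_)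
  · have hzP' : z ∈ P'.support := by simpa using List.mem_of_mem_tail hz'
    rcases hmeet z (List.mem_of_mem_tail hz) hzP' with rfl | rfl
    · exact hstart hP hz
    · exact hstart hP'.reverse hz'
  · by_contra! hlen
    interval_cases h : P.length
    · exact hne (Walk.eq_of_length_eq_zero h)
    · exact hxy (Walk.adj_of_length_eq_one h)

theorem IsPeripheralSet.isArcPair_of_subset (hX : IsPeripheralSet G X) {P P' : G.Walk x y}
    (hP : P.IsPath) (hP' : P'.IsPath)
    (hmeet : ∀ z ∈ P.support, z ∈ P'.support → z = x ∨ z = y) (hne : x ≠ y)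
    (hxy : ¬ G.Adj x y) (hPX : ∀ z ∈ P.support, z ∈ X) (hP'X : ∀ z ∈ P'.support, z ∈ X) :
    IsArcPair X P P' := by
  have hc := isCycle_append_reverse hP hP' hmeet hne hxy
  have hcX : ∀ z ∈ (P.append P'.reverse).support, z ∈ X := fun z hz =>
    ((Walk.mem_support_append_iff _ _).mp hz).elim (hPX z) fun h => hP'X z (by simpa using h)
  have hXc := hX.subset_support_of_isCycle hc hcX
  have harc := isArcPair_of_isCycle hc hne (fun z => ⟨hXc z, hcX z⟩)
    fun a ha b hb hab => hX.mem_edges_of_isCycle hc hcX (hXc a ha) hb hab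
  rwa [Walk.reverse_reverse] at harc

theorem mem_support_iff_of_mem_edges {p : G.Walk x y} (hp : p.IsPath) (h : s(x, y) ∈ p.edges)
    {z : V} : z ∈ p.support ↔ z = x ∨ z = y := by
  rw [hp.eq_adj_toWalk_of_mem_edges h]
  simp [Adj.toWalk]

theorem ThreeConnected.inter_subset_pair_of_ear (hG : ThreeConnected G) (A : AngleSystem G)
    (hX₁ : IsPeripheralSet G X₁) (hX₂ : IsPeripheralSet G X₂) {M N : G.Walk x y} {q : V}
    (hx : x ∈ X₁) (hy : y ∈ X₁) (hne : x ≠ y) (hMN : IsArcPair X₂ M N) (hq : q ∈ M.support)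
    (hqX₁ : q ∉ X₁) (hM : ∀ z ∈ M.support, z ∈ X₁ → z = x ∨ z = y) : X₁ ∩ X₂ ⊆ {x, y} := by
  have hMX₂ : ∀ z ∈ M.support, z ∈ X₂ := fun z hz => (hMN.mem_iff z).mpr (.inl hz)
  obtain ⟨P, P', hPP'⟩ := hX₁.exists_isArcPair hx hy hne
  by_cases hxy : G.Adj x y
  · rcases hMN.mem_edges x (hMX₂ x M.start_mem_support) y (hMX₂ y M.end_mem_support) hxy
      with he | he
    · rw [mem_support_iff_of_mem_edges hMN.isPath_left he] at hq
      exact (hq.elim (fun h => hqX₁ (h ▸ hx)) fun h => hqX₁ (h ▸ hy)).elim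
    · exact fun z hz => ((hMN.mem_iff z).mp hz.2).elim (hM z · hz.1)
        (mem_support_iff_of_mem_edges hMN.isPath_right he).mp
  · have hnot {Q Q' : G.Walk x y} (hQ : IsArcPair X₁ Q Q') : ∃ z ∈ Q.support, z ∉ X₂ := by
      by_contra! hQX₂
      have hQM := hX₂.isArcPair_of_subset hQ.isPath_left hMN.isPath_left
        (fun z hz hzM => hM z hzM ((hQ.mem_iff z).mpr (.inl hz))) hne hxy hQX₂ hMX₂
      exact hG.false_of_two_isArcPair A hQ hQM hX₁.preconnectedOn_compl hX₂.preconnectedOn_compl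
        (fun z hz hzM => hM z hzM ((hQ.mem_iff z).mpr (.inr hz))) hne hxy
    exact (hxy <| hPP'.adj_of_notMem A hX₁.preconnectedOn_compl hX₂.preconnectedOn_compl hne
      hMN.isPath_left hMX₂ hM (hnot hPP') (hnot hPP'.symm)).elim

theorem ThreeConnected.inter_subset_pair (hG : ThreeConnected G) (A : AngleSystem G)
    (hX₁ : IsPeripheralSet G X₁) (hX₂ : IsPeripheralSet G X₂) (hne : X₁ ≠ X₂) {a b : V}
    (hab : a ≠ b) (ha : a ∈ X₁ ∩ X₂) (hb : b ∈ X₁ ∩ X₂) : X₁ ∩ X₂ ⊆ {a, b} := by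
  obtain ⟨q, hq, hqX₁⟩ := Set.not_subset.mp fun h => hne (hX₂.eq_of_subset hX₁ h).symm
  obtain ⟨x, y, M, N, hx, hy, hxy, hMN, hqM, hM⟩ := hX₂.exists_ear hq hqX₁ ha hb hab
  have hsub := hG.inter_subset_pair_of_ear A hX₁ hX₂ hx hy hxy hMN hqM hqX₁ hM
  have ha' := hsub ha
  have hb' := hsub hb
  intro z hz
  have hz' := hsub hz
  simp only [Set.mem_insert_iff, Set.mem_singleton_iff] at ha' hb' hz' ⊢
  grind

theorem IsPeripheralSet.exists_path_of_adj (hX : IsPeripheralSet G X) (hu : u ∈ X) (hv : v ∈ X)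
    (huv : G.Adj u v) : ∃ (a : V) (L : G.Walk u a) (R : G.Walk a v),
      u ∉ R.support ∧ v ∉ L.support ∧ ∀ z, z ∈ X ↔ z ∈ (L.append R).support := by
  have hpath : ∃ P : G.Walk u v, P.IsPath ∧ ∀ z, z ∈ X ↔ z ∈ P.support := by
    have key {P P' : G.Walk u v} (h : IsArcPair X P P') (he : s(u, v) ∈ P.edges) (z : V) :
        z ∈ X ↔ z ∈ P'.support := by
      rw [h.mem_iff, mem_support_iff_of_mem_edges h.isPath_left he, or_iff_right_iff_imp]
      rintro (rfl | rfl) <;> simp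
    obtain ⟨P, P', h⟩ := hX.exists_isArcPair hu hv huv.ne
    rcases h.mem_edges u hu v hv huv with he | he
    · exact ⟨P', h.isPath_right, key h he⟩
    · exact ⟨P, h.isPath_left, key h.symm he⟩
  obtain ⟨P, hP, hXP⟩ := hpath
  obtain ⟨a, ha, hauv⟩ := hX.nonempty_diff_pair u v
  rw [Set.mem_insert_iff, Set.mem_singleton_iff, not_or] at hauv
  obtain ⟨L, R, rfl⟩ := Walk.mem_support_iff_exists_append.mp ((hXP a).mp ha)
  obtain ⟨huR, hvL⟩ := notMem_support_of_isPath_append hP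
  exact ⟨a, L, R, huR (Ne.symm hauv.1), hvL (Ne.symm hauv.2), hXP⟩

theorem IsPeripheralSet.walkAngle_sub_eq (A : AngleSystem G) (hX : IsPeripheralSet G X)
    {p p' : G.Walk u v} {a b : V} (hp : ∀ z ∈ p.support, z ∈ X) (hp' : ∀ z ∈ p'.support, z ∈ X)
    (ha : a ∉ X) (hb : b ∉ X) :
    A.walkAngle p a - A.walkAngle p' a = A.walkAngle p b - A.walkAngle p' b := by
  obtain ⟨q, hq⟩ := hX.preconnectedOn_compl a ha b hb
  exact A.walkAngle_sub_eq_of_disjoint p p' q (fun z hz hzq => hq z hzq (hp z hz))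
    fun z hz hzq => hq z hzq (hp' z hz)

theorem notMem_of_inter_subset_pair {X Y : Set V} {L : G.Walk u x} {R : G.Walk x v}
    (hXY : X ∩ Y ⊆ {u, v}) (huR : u ∉ R.support) (hvL : v ∉ L.support)
    (hX : ∀ z, z ∈ X ↔ z ∈ (L.append R).support) : x ∉ Y := fun hxY => by
  rcases hXY ⟨(hX x).mpr (by simp [Walk.mem_support_append_iff]), hxY⟩ with rfl | rfl
  exacts [huR R.start_mem_support, hvL L.end_mem_support]

theorem disjoint_of_inter_subset_pair {X Y : Set V} {L : G.Walk u x} {R : G.Walk x v}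
    {L' : G.Walk u y} {R' : G.Walk y v} (hXY : X ∩ Y ⊆ {u, v}) (hvL : v ∉ L.support)
    (huR' : u ∉ R'.support) (hX : ∀ z, z ∈ X ↔ z ∈ (L.append R).support)
    (hY : ∀ z, z ∈ Y ↔ z ∈ (L'.append R').support) : L.support.Disjoint R'.support :=
  fun z hz hz' => by
    rcases hXY ⟨(hX z).mpr (by simp [Walk.mem_support_append_iff, hz]),
      (hY z).mpr (by simp [Walk.mem_support_append_iff, hz'])⟩ with rfl | rfl
    exacts [huR' hz', hvL hz]

theorem ThreeConnected.eq_or_eq_or_eq_of_adj (hG : ThreeConnected G) (A : AngleSystem G)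
    (hX₁ : IsPeripheralSet G X₁) (hX₂ : IsPeripheralSet G X₂) (hX₃ : IsPeripheralSet G X₃)
    (huv : G.Adj u v) (hu₁ : u ∈ X₁) (hv₁ : v ∈ X₁) (hu₂ : u ∈ X₂) (hv₂ : v ∈ X₂)
    (hu₃ : u ∈ X₃) (hv₃ : v ∈ X₃) : X₁ = X₂ ∨ X₁ = X₃ ∨ X₂ = X₃ := by
  by_contra! hne
  obtain ⟨hne₁₂, hne₁₃, hne₂₃⟩ := hne
  have h₁₂ : X₁ ∩ X₂ ⊆ {u, v} :=
    hG.inter_subset_pair A hX₁ hX₂ hne₁₂ huv.ne ⟨hu₁, hu₂⟩ ⟨hv₁, hv₂⟩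
  have h₁₃ : X₁ ∩ X₃ ⊆ {u, v} :=
    hG.inter_subset_pair A hX₁ hX₃ hne₁₃ huv.ne ⟨hu₁, hu₃⟩ ⟨hv₁, hv₃⟩
  have h₂₃ : X₂ ∩ X₃ ⊆ {u, v} :=
    hG.inter_subset_pair A hX₂ hX₃ hne₂₃ huv.ne ⟨hu₂, hu₃⟩ ⟨hv₂, hv₃⟩
  have h₂₁ := Set.inter_comm X₁ X₂ ▸ h₁₂
  have h₃₁ := Set.inter_comm X₁ X₃ ▸ h₁₃
  have h₃₂ := Set.inter_comm X₂ X₃ ▸ h₂₃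
  obtain ⟨a, L₁, R₁, huR₁, hvL₁, hXP₁⟩ := hX₁.exists_path_of_adj hu₁ hv₁ huv
  obtain ⟨b, L₂, R₂, huR₂, hvL₂, hXP₂⟩ := hX₂.exists_path_of_adj hu₂ hv₂ huv
  obtain ⟨c, L₃, R₃, huR₃, hvL₃, hXP₃⟩ := hX₃.exists_path_of_adj hu₃ hv₃ huv
  have hedge {X : Set V} (hu : u ∈ X) (hv : v ∈ X) : ∀ z ∈ huv.toWalk.support, z ∈ X := by
    simp [Adj.toWalk, hu, hv]
  have e₁ := hX₁.walkAngle_sub_eq A (fun z => (hXP₁ z).mpr) (hedge hu₁ hv₁)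
    (notMem_of_inter_subset_pair h₂₁ huR₂ hvL₂ hXP₂)
    (notMem_of_inter_subset_pair h₃₁ huR₃ hvL₃ hXP₃)
  have e₂ := hX₂.walkAngle_sub_eq A (fun z => (hXP₂ z).mpr) (hedge hu₂ hv₂)
    (notMem_of_inter_subset_pair h₁₂ huR₁ hvL₁ hXP₁)
    (notMem_of_inter_subset_pair h₃₂ huR₃ hvL₃ hXP₃)
  have e₃ := hX₃.walkAngle_sub_eq A (fun z => (hXP₃ z).mpr) (hedge hu₃ hv₃)
    (notMem_of_inter_subset_pair h₁₃ huR₁ hvL₁ hXP₁)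
    (notMem_of_inter_subset_pair h₂₃ huR₂ hvL₂ hXP₂)
  exact A.walkAngle_theta_ne_zero L₁ R₁ L₂ R₂ L₃ R₃
    (disjoint_of_inter_subset_pair h₁₂ hvL₁ huR₂ hXP₁ hXP₂)
    (disjoint_of_inter_subset_pair h₁₃ hvL₁ huR₃ hXP₁ hXP₃)
    (disjoint_of_inter_subset_pair h₂₁ hvL₂ huR₁ hXP₂ hXP₁)
    (disjoint_of_inter_subset_pair h₂₃ hvL₂ huR₃ hXP₂ hXP₃)
    (disjoint_of_inter_subset_pair h₃₁ hvL₃ huR₁ hXP₃ hXP₁)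
    (disjoint_of_inter_subset_pair h₃₂ hvL₃ huR₂ hXP₃ hXP₂) (by linear_combination -e₁ + e₂ - e₃)

end PeripheralSets

namespace LocalSystem

variable {V : Type*} {G : SimpleGraph V} {E : Set (Sym2 V)} {F : Set V} {u v w : V}

open Classical in
/-- The local system with two-element fibres whose monodromy counts, modulo 2, how often a walk
traverses an edge of `E`. -/
noncomputable def parity (G : SimpleGraph V) (E : Set (Sym2 V)) : LocalSystem G fun _ => Bool where
  map {u v} _ b := b ^^ decide (s(u, v) ∈ E)
  map_symm_map {u v} _ b := by simp [Sym2.eq_swap (a := v) (b := u)]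

open Classical in
@[simp]
theorem parity_map (h : G.Adj u v) (b : Bool) :
    (parity G E).map h b = (b ^^ decide (s(u, v) ∈ E)) := rfl

theorem parity_transport_of_forall_notMem {p : G.Walk u v} (hp : ∀ e ∈ p.edges, e ∉ E) :
    (parity G E).transport p = id := by
  induction p with
  | nil => rfl
  | cons h p ih =>
    rw [Walk.edges_cons, List.forall_mem_cons] at hp
    funext b
    simp [ih hp.2, hp.1]

theorem parity_transport_of_notMem_support {p : G.Walk v w} (hp : u ∉ p.support) :
    (parity G ((s(u, ·)) '' F)).transport p = id :=
  parity_transport_of_forall_notMem <| by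
    rintro _ he ⟨x, -, rfl⟩
    exact hp (p.fst_mem_support_of_mem_edges he)

open Classical in
theorem parity_transport_cons_concat {a b : V} (hua : G.Adj u a) {p : G.Walk a b} (hbu : G.Adj b u)
    (hp : u ∉ p.support) (t : Bool) :
    (parity G ((s(u, ·)) '' F)).transport (.cons hua (p.concat hbu)) t
      = ((t ^^ decide (a ∈ F)) ^^ decide (b ∈ F)) := by
  have hmem (x : V) : s(u, x) ∈ (s(u, ·)) '' F ↔ x ∈ F :=
    Function.Injective.mem_set_image fun _ _ h => Sym2.congr_right.mp h
  rw [transport_cons, transport_concat, parity_transport_of_notMem_support hp]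
  simp only [Function.comp_apply, id, parity_map, Sym2.eq_swap (a := b), hmem]

end LocalSystem

section Rigidity

variable {V : Type*} {G : SimpleGraph V} {X : Set V} {u v w x y z : V}

theorem exists_eq_cons_concat_of_isCycle {c : G.Walk u u} (hc : c.IsCycle) :
    ∃ (a b : V) (hua : G.Adj u a) (p : G.Walk a b) (hbu : G.Adj b u),
      u ∉ p.support ∧ c = .cons hua (p.concat hbu) := by
  cases c with
  | nil => exact (hc.ne_nil rfl).elim
  | @cons _ a _ hua q =>
    cases q with
    | nil => exact (hua.ne rfl).elim
    | cons h q =>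
      obtain ⟨b, p, hbu, hq⟩ := Walk.exists_cons_eq_concat h q
      rw [hq, Walk.cons_isCycle_iff, Walk.concat_isPath_iff] at hc
      exact ⟨a, b, hua, p, hbu, hc.1.2, by rw [hq]⟩

open LocalSystem in
/-- The peripheral cycles through `u` connect the neighbours of `u`: if `F` is closed under passing
to the other neighbour on such a cycle, no peripheral cycle sees the parity of the number of
traversed edges between `u` and `F`, hence no closed walk does. -/
theorem ThreeConnected.neighborSet_subset_of_closed [G.LocallyFinite] (hG : ThreeConnected G)
    (hone : OneEnded G) {F : Set V} (hv : v ∈ F) (huv : G.Adj u v)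
    (hF : ∀ X, IsPeripheralSet G X → u ∈ X → ∀ w ∈ X, w ∈ F → G.Adj u w →
      ∀ w' ∈ X, G.Adj u w' → w' ∈ F) : G.neighborSet u ⊆ F := by
  classical
  have hflat : (parity G ((s(u, ·)) '' F)).IsFlatOn Set.univ :=
    isFlatOn_univ_of_isPeripheral hone hG fun v c hc => by
      by_cases hu : u ∈ c.support
      · refine transport_eq_id_of_rotate _ hu ?_
        obtain ⟨a, b, hua, p, hbu, hp, hcp⟩ := exists_eq_cons_concat_of_isCycle (hc.1.rotate hu)
        have hsupp (z : V) (hz : z ∈ p.support) : z ∈ c.support := by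
          rw [← Walk.mem_support_rotate_iff c u hu, hcp]
          simp [hz]
        have hab : a ∈ F ↔ b ∈ F :=
          ⟨fun h => hF _ ⟨v, c, hc, rfl⟩ hu a (hsupp a p.start_mem_support) h hua b
              (hsupp b p.end_mem_support) hbu.symm,
            fun h => hF _ ⟨v, c, hc, rfl⟩ hu b (hsupp b p.end_mem_support) h hbu.symm a
              (hsupp a p.start_mem_support) hua⟩
        funext t
        rw [hcp, parity_transport_cons_concat hua hbu hp, hab]
        simp
      · exact parity_transport_of_notMem_support hu
  intro w hw
  obtain ⟨p, hp⟩ := hG.preconnectedOn_compl_pair u u v (by simp [huv.ne']) w (by simp [hw.ne'])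
  have h := congrFun (hflat (.cons huv (p.concat hw.symm)) fun _ _ => trivial) false
  rw [parity_transport_cons_concat huv hw.symm fun hu => hp u hu (by simp)] at h
  simpa [hv] using h

end Rigidity

section Automorphisms

variable {V : Type*} {G : SimpleGraph V} {X : Set V} {u v w : V}

namespace IsPeripheralSet

theorem image (hX : IsPeripheralSet G X) (α : G ≃g G) : IsPeripheralSet G (α '' X) := by
  obtain ⟨v, c, hc, rfl⟩ := hX
  have hsupp : {x | x ∈ (c.map α.toHom).support} = α '' {x | x ∈ c.support} := by
    ext x
    simp
  refine ⟨α v, c.map α.toHom, isPeripheral_of_preconnectedOn_compl (hc.1.map α.injective) ?_ ?_,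
    hsupp⟩
  · simp only [Walk.support_map, List.forall_mem_map, Walk.edges_map]
    exact fun a ha b hb hab => List.mem_map.mpr ⟨_, hc.2.1 a ha b hb (α.map_adj_iff.mp hab), rfl⟩
  · rw [hsupp, ← Set.image_compl_eq α.bijective]
    rintro _ ⟨x, hx, rfl⟩ _ ⟨y, hy, rfl⟩
    obtain ⟨p, hp⟩ := hc.preconnectedOn_compl x hx y hy
    exact ⟨p.map α.toHom, by simpa using fun z hz => hp z hz⟩

theorem exists_other_neighbor (hX : IsPeripheralSet G X) (hu : u ∈ X) (hw : w ∈ X)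
    (huw : G.Adj u w) :
    ∃ w' ∈ X, G.Adj u w' ∧ w' ≠ w ∧ ∀ z ∈ X, G.Adj u z → z = w ∨ z = w' := by
  obtain ⟨a, b, hab, hset⟩ := Set.ncard_eq_two.mp (hX.ncard_neighbors hu)
  have hmem (z : V) : z ∈ X ∧ G.Adj u z ↔ z = a ∨ z = b := Set.ext_iff.mp hset z
  rcases (hmem w).mp ⟨hw, huw⟩ with rfl | rfl
  · obtain ⟨hbX, hub⟩ := (hmem b).mpr (.inr rfl)
    exact ⟨b, hbX, hub, hab.symm, fun z hz huz => (hmem z).mp ⟨hz, huz⟩⟩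
  · obtain ⟨haX, hua⟩ := (hmem a).mpr (.inl rfl)
    exact ⟨a, haX, hua, hab, fun z hz huz => ((hmem z).mp ⟨hz, huz⟩).symm⟩

theorem apply_eq_of_image_eq (hX : IsPeripheralSet G X) {α : G ≃g G} (hαX : α '' X = X)
    (hu : u ∈ X) (hw : w ∈ X) (huw : G.Adj u w) (hαu : α u = u) (hαw : α w = w) (hv : v ∈ X)
    (huv : G.Adj u v) : α v = v := by
  rcases eq_or_ne v w with rfl | hvw
  · exact hαw
  obtain ⟨w', -, -, -, hall⟩ := hX.exists_other_neighbor hu hw huw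
  have hαv : G.Adj u (α v) := by simpa [hαu] using α.map_adj_iff.mpr huv
  rcases hall _ (hαX ▸ Set.mem_image_of_mem α hv) hαv with h | h
  · exact absurd (α.injective (h.trans hαw.symm)) hvw
  · rw [h, (hall v hv huv).resolve_left hvw]

end IsPeripheralSet

namespace ThreeConnected

theorem image_eq_of_apply_eq (hG : ThreeConnected G) (A : AngleSystem G) (hX : IsPeripheralSet G X)
    {α : G ≃g G} (hv : v ∈ X) (hu : u ∈ X) (hvu : G.Adj v u) (hαv : α v = v)
    (hαN : ∀ w, G.Adj v w → α w = w) : α '' X = X := by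
  by_contra hne
  obtain ⟨w, hw, hvw, hwu, -⟩ := hX.exists_other_neighbor hv hu hvu
  have hmem {x : V} (hx : x ∈ X) (hαx : α x = x) : x ∈ α '' X ∩ X := ⟨⟨x, hx, hαx⟩, hx⟩
  rcases hG.inter_subset_pair A (hX.image α) hX hne hvu.ne (hmem hv hαv) (hmem hu (hαN u hvu))
    (hmem hw (hαN w hvw)) with rfl | rfl
  exacts [hvw.ne rfl, hwu rfl]

theorem apply_eq_of_adj [G.LocallyFinite] (hG : ThreeConnected G) (hone : OneEnded G)
    (A : AngleSystem G) {α : G ≃g G} (hαv : α v = v) (hαN : ∀ w, G.Adj v w → α w = w)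
    (hvu : G.Adj v u) (huw : G.Adj u w) : α w = w := by
  have hαu := hαN u hvu
  suffices h : G.neighborSet u ⊆
      {w | α w = w ∧ ∀ X, IsPeripheralSet G X → u ∈ X → w ∈ X → α '' X = X} from (h huw).1
  refine hG.neighborSet_subset_of_closed hone (v := v)
    ⟨hαv, fun X hX hu hv => hG.image_eq_of_apply_eq A hX hv hu hvu hαv hαN⟩ hvu.symm ?_
  rintro X hX hu w hw ⟨hαw, hwX⟩ huw x hx hux
  have hαX := hwX X hX hu hw
  have hαx := hX.apply_eq_of_image_eq hαX hu hw huw hαu hαw hx hux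
  refine ⟨hαx, fun Y hY huY hxY => ?_⟩
  rcases hG.eq_or_eq_or_eq_of_adj A (hY.image α) hY hX hux ⟨u, huY, hαu⟩ ⟨x, hxY, hαx⟩ huY hxY hu hx
    with h | h | rfl
  · exact h
  · rw [α.injective.image_injective (h.trans hαX.symm), hαX]
  · exact hαX

theorem apply_eq_self_of_forall_adj [G.LocallyFinite] (hG : ThreeConnected G) (hone : OneEnded G)
    (A : AngleSystem G) {α : G ≃g G} (hαv : α v = v) (hαN : ∀ w, G.Adj v w → α w = w) (x : V) :
    α x = x := by
  have h : Set.univ ⊆ {v | α v = v ∧ ∀ w, G.Adj v w → α w = w} :=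
    (preconnectedOn_univ.mpr hG.preconnected).subset_of_adj_closed (x := v) trivial ⟨hαv, hαN⟩
      fun a ⟨haa, haN⟩ _ b _ hab =>
        ⟨haN b hab, fun w hbw => hG.apply_eq_of_adj hone A haa haN hab hbw⟩
  exact (h trivial).1

theorem finite_setOf_isPeripheralSet_mem [G.LocallyFinite] (hG : ThreeConnected G)
    (A : AngleSystem G) (o : V) : {X | IsPeripheralSet G X ∧ o ∈ X}.Finite := by
  have hsub : {X | IsPeripheralSet G X ∧ o ∈ X} ⊆
      ⋃ w ∈ G.neighborSet o, {X | IsPeripheralSet G X ∧ o ∈ X ∧ w ∈ X} := by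
    rintro X ⟨hX, ho⟩
    obtain ⟨w, hw, how⟩ := Set.nonempty_of_ncard_ne_zero
      (hX.ncard_neighbors ho ▸ two_ne_zero)
    exact Set.mem_biUnion how ⟨hX, ho, hw⟩
  refine ((Set.toFinite (G.neighborSet o)).biUnion fun w how => ?_).subset hsub
  by_contra hinf
  obtain ⟨t, ht, hcard⟩ := Set.Infinite.exists_subset_card_eq hinf 3
  obtain ⟨X₁, X₂, X₃, h₁₂, h₁₃, h₂₃, rfl⟩ := Finset.card_eq_three.mp hcard
  obtain ⟨hX₁, ho₁, hw₁⟩ := ht (show X₁ ∈ _ by simp)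
  obtain ⟨hX₂, ho₂, hw₂⟩ := ht (show X₂ ∈ _ by simp)
  obtain ⟨hX₃, ho₃, hw₃⟩ := ht (show X₃ ∈ _ by simp)
  rcases hG.eq_or_eq_or_eq_of_adj A hX₁ hX₂ hX₃ how ho₁ hw₁ ho₂ hw₂ ho₃ hw₃ with h | h | h
  exacts [h₁₂ h, h₁₃ h, h₂₃ h]

theorem exists_ncard_le [G.LocallyFinite] (hG : ThreeConnected G) (A : AngleSystem G)
    (htrans : VertexTransitive G) : ∃ ℓ : ℕ, ∀ X, IsPeripheralSet G X → X.ncard ≤ ℓ := by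
  rcases isEmpty_or_nonempty V with _ | ⟨⟨o⟩⟩
  · exact ⟨0, fun X _ => by simp [Set.eq_empty_of_isEmpty X]⟩
  obtain ⟨ℓ, hℓ⟩ := ((hG.finite_setOf_isPeripheralSet_mem A o).image Set.ncard).bddAbove
  refine ⟨ℓ, fun X hX => ?_⟩
  obtain ⟨x, hx, -⟩ := hX.nonempty_diff_pair o o
  obtain ⟨α, hα⟩ := htrans x o
  rw [← Set.ncard_image_of_injective X α.injective]
  exact hℓ ⟨α '' X, ⟨hX.image α, x, hx, hα⟩, rfl⟩

end ThreeConnected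

end Automorphisms

section Balls

variable {V W : Type*} {G : SimpleGraph V} {H : SimpleGraph W} {u v w : V} {k m n : ℕ}

/-- The closed ball of radius `n` about `v`. It is defined by the extended distance, so that it
lies in the component of `v`; the junk value `G.dist v u = 0` for unreachable `u` plays no role. -/
def closedBall (G : SimpleGraph V) (v : V) (n : ℕ) : Set V := {u | G.edist v u ≤ n}

theorem mem_closedBall_iff_exists_walk :
    u ∈ closedBall G v n ↔ ∃ p : G.Walk v u, p.length ≤ n := by
  refine ⟨fun h => ?_, fun ⟨p, hp⟩ => (edist_le p).trans (by exact_mod_cast hp)⟩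
  have h' : G.edist v u ≤ n := h
  obtain ⟨p, hp⟩ := exists_walk_of_edist_ne_top (h'.trans_lt (ENat.natCast_lt_top n)).ne
  exact ⟨p, by exact_mod_cast hp.trans_le h'⟩

theorem closedBall_subset_closedBall (h : m ≤ n) : closedBall G v m ⊆ closedBall G v n :=
  fun _ hu => le_trans (show G.edist v _ ≤ m from hu) (by exact_mod_cast h)

@[simp]
theorem mem_closedBall_self : v ∈ closedBall G v n :=
  mem_closedBall_iff_exists_walk.mpr ⟨.nil, n.zero_le⟩

theorem mem_closedBall_trans (hv : v ∈ closedBall G u m) (hw : w ∈ closedBall G v n)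
    (h : m + n ≤ k) : w ∈ closedBall G u k := by
  rw [mem_closedBall_iff_exists_walk] at hv hw ⊢
  obtain ⟨p, hp⟩ := hv
  obtain ⟨q, hq⟩ := hw
  exact ⟨p.append q, by rw [Walk.length_append]; lia⟩

theorem closedBall_subset_of_mem (hu : u ∈ closedBall G v m) (h : m + k ≤ n) :
    closedBall G u k ⊆ closedBall G v n :=
  fun _ hw => mem_closedBall_trans hu hw h

theorem mem_closedBall_of_adj (h : G.Adj v u) (hn : 1 ≤ n) : u ∈ closedBall G v n :=
  mem_closedBall_iff_exists_walk.mpr ⟨.cons h .nil, hn⟩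

theorem mem_closedBall_zero : u ∈ closedBall G v 0 ↔ u = v := by
  rw [mem_closedBall_iff_exists_walk]
  refine ⟨fun ⟨p, hp⟩ => (Walk.eq_of_length_eq_zero (Nat.le_zero.mp hp)).symm, ?_⟩
  rintro rfl
  exact ⟨.nil, le_rfl⟩

theorem mem_closedBall_succ :
    u ∈ closedBall G v (n + 1) ↔
      u ∈ closedBall G v n ∨ ∃ y ∈ closedBall G v n, G.Adj y u := by
  refine ⟨fun hu => ?_, ?_⟩
  · obtain ⟨p, hp⟩ := mem_closedBall_iff_exists_walk.mp hu
    rw [← p.length_reverse] at hp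
    cases h : p.reverse with
    | nil => exact .inl mem_closedBall_self
    | @cons _ y _ hy q =>
      rw [h, Walk.length_cons] at hp
      exact .inr ⟨y, mem_closedBall_iff_exists_walk.mpr
        ⟨q.reverse, by rw [Walk.length_reverse]; lia⟩, hy.symm⟩
  · rintro (hu | ⟨y, hy, hyu⟩)
    · exact closedBall_subset_closedBall n.le_succ hu
    · exact mem_closedBall_trans hy (mem_closedBall_of_adj hyu le_rfl) le_rfl

theorem mem_closedBall_one : u ∈ closedBall G v 1 ↔ u = v ∨ G.Adj v u := by
  simp [mem_closedBall_succ, mem_closedBall_zero]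

theorem map_mem_closedBall (φ : G →g H) (hu : u ∈ closedBall G v n) :
    φ u ∈ closedBall H (φ v) n := by
  rw [mem_closedBall_iff_exists_walk] at hu ⊢
  obtain ⟨p, hp⟩ := hu
  exact ⟨p.map φ, by simpa using hp⟩

theorem apply_mem_closedBall (α : G ≃g H) : α u ∈ closedBall H (α v) n ↔ u ∈ closedBall G v n :=
  ⟨fun h => by simpa using map_mem_closedBall α.symm.toHom h, map_mem_closedBall α.toHom⟩

theorem image_closedBall (α : G ≃g H) : α '' closedBall G v n = closedBall H (α v) n := by
  ext z
  obtain ⟨u, rfl⟩ := α.surjective z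
  rw [α.injective.mem_set_image, apply_mem_closedBall]

theorem finite_closedBall [G.LocallyFinite] (v : V) (n : ℕ) : (closedBall G v n).Finite := by
  induction n with
  | zero => exact (Set.finite_singleton v).subset fun u hu => mem_closedBall_zero.mp hu
  | succ n ih =>
    refine (ih.union (ih.biUnion fun y _ => Set.toFinite (G.neighborSet y))).subset fun u hu => ?_
    simpa [mem_closedBall_succ] using hu

theorem VertexTransitive.closedBall_eq_of_subset [G.LocallyFinite] (htrans : VertexTransitive G)
    (h : closedBall G u n ⊆ closedBall G v n) : closedBall G u n = closedBall G v n := by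
  obtain ⟨α, rfl⟩ := htrans u v
  refine Set.eq_of_subset_of_ncard_le h ?_ (finite_closedBall _ n)
  rw [← image_closedBall, Set.ncard_image_of_injective _ α.injective]

theorem support_subset_closedBall (p : G.Walk v u) (hp : p.length ≤ n) :
    ∀ z ∈ p.support, z ∈ closedBall G v n := by
  classical
  exact fun z hz => mem_closedBall_iff_exists_walk.mpr
    ⟨p.takeUntil z hz, (p.length_takeUntil_le_length hz).trans hp⟩

theorem closedBall_induce_eq_univ {B : Set V} (hB : B = closedBall G v n) (hv : v ∈ B) :
    closedBall (G.induce B) ⟨v, hv⟩ n = Set.univ := by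
  subst hB
  refine Set.eq_univ_of_forall fun ⟨u, hu⟩ => ?_
  obtain ⟨p, hp⟩ := mem_closedBall_iff_exists_walk.mp hu
  have hlen := congrArg Walk.length (p.map_induce (support_subset_closedBall p hp))
  rw [Walk.length_map] at hlen
  exact mem_closedBall_iff_exists_walk.mpr
    ⟨p.induce _ (support_subset_closedBall p hp), hlen.trans_le hp⟩

theorem reachable_of_mem_closedBall (hu : u ∈ closedBall G v n) : G.Reachable v u :=
  (mem_closedBall_iff_exists_walk.mp hu).elim fun p _ => ⟨p⟩

theorem preconnected_of_closedBall_eq_univ (h : closedBall G v n = Set.univ) : G.Preconnected :=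
  fun x y => (reachable_of_mem_closedBall (h.ge (Set.mem_univ x))).symm.trans
    (reachable_of_mem_closedBall (h.ge (Set.mem_univ y)))

theorem setOf_dist_le_eq_closedBall (h : ∀ u, G.dist v u ≤ n → G.Reachable v u) :
    {u | G.dist v u ≤ n} = closedBall G v n := by
  ext u
  refine ⟨fun hu => ?_, fun hu => ?_⟩
  · obtain ⟨p, hp⟩ := (h u hu).exists_walk_length_eq_dist
    exact mem_closedBall_iff_exists_walk.mpr ⟨p, hp.trans_le hu⟩
  · obtain ⟨p, hp⟩ := mem_closedBall_iff_exists_walk.mp hu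
    exact (dist_le p).trans hp

end Balls

/-- `f` maps the ball of radius `n` about `v` isomorphically onto the ball of radius `n` about
`f v`. The function `f` is total for convenience; its values off the ball are irrelevant. -/
structure IsLocalIso {V W : Type*} (G : SimpleGraph V) (H : SimpleGraph W) (n : ℕ) (v : V)
    (f : V → W) : Prop where
  injOn : Set.InjOn f (closedBall G v n)
  adj_iff : ∀ a ∈ closedBall G v n, ∀ b ∈ closedBall G v n, G.Adj a b ↔ H.Adj (f a) (f b)
  image_eq : f '' closedBall G v n = closedBall H (f v) n

namespace IsLocalIso

variable {V V' W W' : Type*} {G : SimpleGraph V} {G' : SimpleGraph V'} {H : SimpleGraph W}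
  {H' : SimpleGraph W'} {f : V → W} {u v : V} {j k n : ℕ}

theorem mapsTo (hf : IsLocalIso G H n v f) (hu : u ∈ closedBall G v j) (hjk : j + k ≤ n) :
    Set.MapsTo f (closedBall G u k) (closedBall H (f u) k) := by
  induction k with
  | zero =>
    intro z hz
    rw [mem_closedBall_zero.mp hz]
    exact mem_closedBall_self
  | succ k ih =>
    intro z hz
    rcases mem_closedBall_succ.mp hz with hz' | ⟨y, hy, hyz⟩
    · exact mem_closedBall_succ.mpr (.inl (ih (by lia) hz'))
    · refine mem_closedBall_succ.mpr (.inr ⟨f y, ih (by lia) hy, ?_⟩)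
      exact (hf.adj_iff y (mem_closedBall_trans hu hy (by lia)) z
        (mem_closedBall_trans hu hz hjk)).mp hyz

theorem surjOn (hf : IsLocalIso G H n v f) (hu : u ∈ closedBall G v j) (hjk : j + k ≤ n) :
    Set.SurjOn f (closedBall G u k) (closedBall H (f u) k) := by
  induction k with
  | zero =>
    intro z' hz'
    exact ⟨u, mem_closedBall_self, (mem_closedBall_zero.mp hz').symm⟩
  | succ k ih =>
    intro z' hz'
    rcases mem_closedBall_succ.mp hz' with hz' | ⟨y', hy', hyz⟩
    · obtain ⟨z, hz, rfl⟩ := ih (by lia) hz'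
      exact ⟨z, mem_closedBall_succ.mpr (.inl hz), rfl⟩
    · obtain ⟨y, hy, rfl⟩ := ih (by lia) hy'
      have hfu : f u ∈ closedBall H (f v) j :=
        hf.mapsTo (j := 0) (k := j) mem_closedBall_self (by lia) hu
      obtain ⟨z, hz, rfl⟩ := hf.image_eq.ge (mem_closedBall_trans hfu hz' hjk)
      have hyz := (hf.adj_iff y (mem_closedBall_trans hu hy (by lia)) z hz).mpr hyz
      exact ⟨z, mem_closedBall_succ.mpr (.inr ⟨y, hy, hyz⟩), rfl⟩

theorem shrink (hf : IsLocalIso G H n v f) (hu : u ∈ closedBall G v j) (hjk : j + k ≤ n) :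
    IsLocalIso G H k u f where
  injOn := hf.injOn.mono (closedBall_subset_of_mem hu hjk)
  adj_iff a ha b hb := hf.adj_iff a (mem_closedBall_trans hu ha hjk) b
    (mem_closedBall_trans hu hb hjk)
  image_eq := (hf.mapsTo hu hjk).image_subset.antisymm (hf.surjOn hu hjk)

theorem mono (hf : IsLocalIso G H n v f) (hk : k ≤ n) : IsLocalIso G H k v f :=
  hf.shrink (j := 0) mem_closedBall_self (by lia)

theorem congr (hf : IsLocalIso G H n v f) {g : V → W} (h : Set.EqOn g f (closedBall G v n)) :
    IsLocalIso G H n v g where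
  injOn := hf.injOn.congr h.symm
  adj_iff a ha b hb := by rw [h ha, h hb, hf.adj_iff a ha b hb]
  image_eq := by rw [h.image_eq, h mem_closedBall_self, hf.image_eq]

theorem comp_iso (α : G' ≃g G) {v : V'} (hf : IsLocalIso G H n (α v) f) :
    IsLocalIso G' H n v (f ∘ α) where
  injOn _ ha _ hb hab := α.injective
    (hf.injOn ((apply_mem_closedBall α).mpr ha) ((apply_mem_closedBall α).mpr hb) hab)
  adj_iff a ha b hb := α.map_adj_iff.symm.trans
    (hf.adj_iff _ ((apply_mem_closedBall α).mpr ha) _ ((apply_mem_closedBall α).mpr hb))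
  image_eq := by rw [Set.image_comp, image_closedBall, hf.image_eq]; rfl

theorem iso_comp (β : H ≃g H') (hf : IsLocalIso G H n v f) : IsLocalIso G H' n v (β ∘ f) where
  injOn _ ha _ hb hab := hf.injOn ha hb (β.injective hab)
  adj_iff a ha b hb := (hf.adj_iff a ha b hb).trans β.map_adj_iff.symm
  image_eq := by rw [Set.image_comp, hf.image_eq, image_closedBall]; rfl

theorem lift (hf : IsLocalIso G H n v f) {g : V' → W} {v' : V'} (hg : IsLocalIso G' H n v' g)
    (hv : f v = g v') :
    ∃ h : V → V', IsLocalIso G G' n v h ∧ h v = v' ∧ Set.EqOn (g ∘ h) f (closedBall G v n) := by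
  have hball : f '' closedBall G v n = g '' closedBall G' v' n := by
    rw [hf.image_eq, hg.image_eq, hv]
  have : Nonempty V' := ⟨v'⟩
  choose! h hmem hgh using fun u (hu : u ∈ closedBall G v n) =>
    hball.le (Set.mem_image_of_mem f hu)
  have hhv : h v = v' := hg.injOn (hmem v mem_closedBall_self) mem_closedBall_self
    ((hgh v mem_closedBall_self).trans hv)
  refine ⟨h, ⟨fun a ha b hb hab => hf.injOn ha hb ?_, fun a ha b hb => ?_, ?_⟩, hhv, hgh⟩
  · rw [← hgh a ha, ← hgh b hb, hab]
  · rw [hf.adj_iff a ha b hb, hg.adj_iff _ (hmem a ha) _ (hmem b hb), hgh a ha, hgh b hb]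
  · rw [hhv]
    refine Set.Subset.antisymm (Set.image_subset_iff.mpr hmem) fun w hw => ?_
    obtain ⟨u, hu, huw⟩ := hball.ge (Set.mem_image_of_mem g hw)
    exact ⟨u, hu, hg.injOn (hmem u hu) hw ((hgh u hu).trans huw)⟩

end IsLocalIso

section Compactness

open Filter

variable {V W : Type*} {G : SimpleGraph V} {H : SimpleGraph W} {o : V} {o' : W} {h : ℕ → V → W}

theorem exists_mem_closedBall (hG : G.Preconnected) (o u : V) : ∃ n, u ∈ closedBall G o n :=
  (hG o u).elim fun p => ⟨p.length, mem_closedBall_iff_exists_walk.mpr ⟨p, le_rfl⟩⟩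

theorem eventually_mem_closedBall (hG : G.Preconnected) (o u : V) :
    ∀ᶠ n in atTop, u ∈ closedBall G o n := by
  obtain ⟨d, hd⟩ := exists_mem_closedBall hG o u
  filter_upwards [eventually_ge_atTop d] with n hn using closedBall_subset_closedBall hn hd

theorem exists_eventually_apply_eq [H.LocallyFinite] (hG : G.Preconnected)
    (hh : ∀ n, IsLocalIso G H n o (h n)) (ho : ∀ n, h n o = o') {U : Ultrafilter ℕ}
    (hU : (U : Filter ℕ) ≤ atTop) (u : V) : ∃ w, ∀ᶠ n in U, h n u = w := by
  obtain ⟨d, hd⟩ := exists_mem_closedBall hG o u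
  have hmem : ∀ᶠ n in U, ∃ w ∈ closedBall H o' d, h n u = w := by
    filter_upwards [(eventually_ge_atTop d).filter_mono hU] with n hn
    exact ⟨h n u, ho n ▸ (hh n).mapsTo (j := 0) mem_closedBall_self (by lia) hd, rfl⟩
  obtain ⟨w, -, hw⟩ := (Ultrafilter.eventually_exists_mem_iff (finite_closedBall o' d)).mp hmem
  exact ⟨w, hw⟩

theorem exists_eventually_eq_apply [G.LocallyFinite] (hH : H.Preconnected)
    (hh : ∀ n, IsLocalIso G H n o (h n)) (ho : ∀ n, h n o = o') {U : Ultrafilter ℕ}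
    (hU : (U : Filter ℕ) ≤ atTop) (w : W) : ∃ u, ∀ᶠ n in U, h n u = w := by
  obtain ⟨d, hd⟩ := exists_mem_closedBall hH o' w
  have hmem : ∀ᶠ n in U, ∃ u ∈ closedBall G o d, h n u = w := by
    filter_upwards [(eventually_ge_atTop d).filter_mono hU] with n hn
    exact (hh n).surjOn (j := 0) mem_closedBall_self (by lia) (by rwa [ho n])
  obtain ⟨u, -, hu⟩ := (Ultrafilter.eventually_exists_mem_iff (finite_closedBall o d)).mp hmem
  exact ⟨u, hu⟩

-- A limit of `h n` along an ultrafilter exists because each vertex has finitely many images.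
theorem exists_iso_eqOn_of_isLocalIso [G.LocallyFinite] [H.LocallyFinite] (hG : G.Preconnected)
    (hH : H.Preconnected) (hh : ∀ n, IsLocalIso G H n o (h n)) (ho : ∀ n, h n o = o') :
    ∃ α : G ≃g H, ∀ B : Set V, B.Finite → ∃ n, Set.EqOn α (h n) B := by
  let U := hyperfilter ℕ
  have hU : (U : Filter ℕ) ≤ atTop := Nat.cofinite_eq_atTop ▸ hyperfilter_le_cofinite
  choose l hl using exists_eventually_apply_eq hG hh ho hU
  have hcommon : ∀ a b, ∃ n, h n a = l a ∧ h n b = l b ∧ a ∈ closedBall G o n ∧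
      b ∈ closedBall G o n := fun a b =>
    ((hl a).and ((hl b).and (((eventually_mem_closedBall hG o a).and
      (eventually_mem_closedBall hG o b)).filter_mono hU))).exists
  have hinj : Function.Injective l := by
    intro a b hab
    obtain ⟨n, hna, hnb, ha, hb⟩ := hcommon a b
    exact (hh n).injOn ha hb (by rw [hna, hnb, hab])
  have hsurj : Function.Surjective l := by
    intro w
    obtain ⟨u, hu⟩ := exists_eventually_eq_apply hH hh ho hU w
    obtain ⟨n, hnu, hnl⟩ := (hu.and (hl u)).exists
    exact ⟨u, hnl.symm.trans hnu⟩
  have hadj : ∀ {a b}, H.Adj (l a) (l b) ↔ G.Adj a b := by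
    intro a b
    obtain ⟨n, hna, hnb, ha, hb⟩ := hcommon a b
    rw [(hh n).adj_iff a ha b hb, hna, hnb]
  refine ⟨⟨Equiv.ofBijective l ⟨hinj, hsurj⟩, hadj⟩, fun B hB => ?_⟩
  obtain ⟨n, hn⟩ := ((eventually_all_finite hB).mpr fun u _ => hl u).exists
  exact ⟨n, fun u hu => (hn u hu).symm⟩

theorem VertexTransitive.exists_radius_forall_exists_iso_eqOn [G.LocallyFinite]
    (htrans : VertexTransitive G) (hG : G.Preconnected) (m : ℕ) :
    ∃ ρ, m ≤ ρ ∧ ∀ v f, IsLocalIso G G ρ v f → ∃ α : G ≃g G, Set.EqOn α f (closedBall G v m) := by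
  by_contra! hcon
  obtain ⟨o, -⟩ := hcon m le_rfl
  have hbad : ∀ n, ∃ h : V → V, IsLocalIso G G n o h ∧ h o = o ∧
      ∀ α : G ≃g G, ¬ Set.EqOn α h (closedBall G o m) := by
    intro n
    obtain ⟨v, f, hf, hfα⟩ := hcon (n + m) (by lia)
    obtain ⟨γ, rfl⟩ := htrans o v
    obtain ⟨β, hβ⟩ := htrans (f (γ o)) o
    refine ⟨β ∘ f ∘ γ, ((hf.mono (by lia)).comp_iso γ).iso_comp β, hβ, fun α hα => ?_⟩
    refine hfα ((γ.symm.trans α).trans β.symm) fun u hu => ?_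
    obtain ⟨z, hz, rfl⟩ := (image_closedBall γ).ge hu
    simpa using congrArg β.symm (hα hz)
  choose h hh ho hα using hbad
  obtain ⟨α, hαh⟩ := exists_iso_eqOn_of_isLocalIso hG hG hh ho
  obtain ⟨n, hn⟩ := hαh _ (finite_closedBall (G := G) o m)
  exact hα n α hn

end Compactness

section BallIso

variable {V W : Type*} {G : SimpleGraph V} {H : SimpleGraph W} {n : ℕ}

theorem exists_isLocalIso_of_induce_iso {v : V} {w : W} {A : Set V} {B : Set W}
    (φ : G.induce A ≃g H.induce B) (hA : A = closedBall G v n) (hB : B = closedBall H w n)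
    (hv : v ∈ A) (hvw : φ ⟨v, hv⟩ = w) : ∃ f, IsLocalIso G H n v f ∧ f v = w := by
  let f : V → W := Function.extend Subtype.val (fun a => (φ a : W)) fun _ => w
  have hf : ∀ a : A, f a = φ a := Subtype.val_injective.extend_apply _ _
  have hfv : f v = w := (hf ⟨v, hv⟩).trans hvw
  refine ⟨f, ⟨?_, ?_, ?_⟩, hfv⟩
  · rw [← hA]
    intro a ha b hb hab
    rw [hf ⟨a, ha⟩, hf ⟨b, hb⟩] at hab
    exact congrArg Subtype.val (φ.injective (Subtype.ext hab))
  · rw [← hA]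
    intro a ha b hb
    rw [hf ⟨a, ha⟩, hf ⟨b, hb⟩]
    exact (φ.map_adj_iff (v := ⟨a, ha⟩) (w := ⟨b, hb⟩)).symm
  · rw [hfv, ← hA, ← hB]
    refine Set.Subset.antisymm ?_ fun z hz => ?_
    · rintro _ ⟨a, ha, rfl⟩
      exact hf ⟨a, ha⟩ ▸ (φ ⟨a, ha⟩).2
    · obtain ⟨a, ha⟩ := φ.surjective ⟨z, hz⟩
      exact ⟨a, a.2, by rw [hf, ha]⟩

-- The ball isomorphism need not send `x` to `o`, but its image `y` of `x` has the same ball as `o`.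
theorem VertexTransitive.exists_isLocalIso [G.LocallyFinite] (htrans : VertexTransitive G)
    (hG : G.Preconnected) {o : V} {x : W}
    (hx : Nonempty ((H.induce {u | H.dist x u ≤ n}) ≃g (G.induce {u | G.dist o u ≤ n}))) (v : V) :
    ∃ f, IsLocalIso G H n v f ∧ f v = x := by
  obtain ⟨φ⟩ := hx
  have hxx : H.dist x x ≤ n := by simp
  have hGball : {u | G.dist o u ≤ n} = closedBall G o n :=
    setOf_dist_le_eq_closedBall fun u _ => hG o u
  have hGconn : (G.induce {u | G.dist o u ≤ n}).Preconnected :=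
    preconnected_of_closedBall_eq_univ (closedBall_induce_eq_univ hGball (by simp))
  have hHball : {u | H.dist x u ≤ n} = closedBall H x n :=
    setOf_dist_le_eq_closedBall fun u hu =>
      ((φ.symm.preconnected_iff.mp hGconn) ⟨x, hxx⟩ ⟨u, hu⟩).map (Embedding.induce _).toHom
  let y := φ ⟨x, hxx⟩
  have hsub : closedBall G o n ⊆ closedBall G y n := by
    rw [← hGball]
    intro z hz
    have hmem : φ.symm ⟨z, hz⟩ ∈ closedBall (H.induce _) ⟨x, hxx⟩ n :=
      (closedBall_induce_eq_univ hHball hxx).ge (Set.mem_univ _)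
    simpa using map_mem_closedBall ((Embedding.induce _).toHom.comp φ.toHom) hmem
  have hy : {u | G.dist o u ≤ n} = closedBall G y n :=
    hGball.trans (htrans.closedBall_eq_of_subset hsub)
  obtain ⟨f, hf, hfy⟩ := exists_isLocalIso_of_induce_iso φ.symm hy hHball y.2 (by simp [y])
  obtain ⟨α, hα⟩ := htrans v y
  exact ⟨f ∘ α, IsLocalIso.comp_iso α (by rwa [hα]), by simp [hα, hfy]⟩

end BallIso

section Rigidity

/-- A radius at which local isomorphisms of `G` to itself come from automorphisms, in a graph whose
automorphisms are determined by their values on any ball of radius `1`. -/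
structure IsRigidityRadius {V : Type*} (G : SimpleGraph V) (ρ : ℕ) : Prop where
  two_le : 2 ≤ ρ
  exists_iso_eqOn : ∀ v f, IsLocalIso G G ρ v f → ∃ α : G ≃g G, Set.EqOn α f (closedBall G v 2)
  apply_eq_self : ∀ (α : G ≃g G) (v : V), α v = v → (∀ w, G.Adj v w → α w = w) → ∀ x, α x = x

theorem VertexTransitive.exists_isRigidityRadius {V : Type*} {G : SimpleGraph V} [G.LocallyFinite]
    (htrans : VertexTransitive G) (hone : OneEnded G) (A : AngleSystem G) :
    ∃ ρ, IsRigidityRadius G ρ := by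
  obtain ⟨ρ, hρ, hiso⟩ :=
    htrans.exists_radius_forall_exists_iso_eqOn (htrans.preconnected hone) 2
  exact ⟨ρ, hρ, hiso, fun _ _ => (htrans.threeConnected hone).apply_eq_self_of_forall_adj hone A⟩

/-- The rooted form of `H` being `r`-locally `G`: around all `v` and `x` the balls of radius `r`
are isomorphic by a map taking `v` to `x`. -/
def IsLocallyModelledOn {V W : Type*} (H : SimpleGraph W) (G : SimpleGraph V) (r : ℕ) : Prop :=
  ∀ (v : V) (x : W), ∃ f, IsLocalIso G H r v f ∧ f v = x

variable {V W : Type*} {G : SimpleGraph V} {H : SimpleGraph W} {f g : V → W} {v v' : V} {ρ r : ℕ}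

namespace IsRigidityRadius

theorem exists_iso_of_apply_eq (hρ : IsRigidityRadius G ρ) (hf : IsLocalIso G H ρ v f)
    (hg : IsLocalIso G H ρ v' g) (hv : f v = g v') :
    ∃ α : G ≃g G, α v = v' ∧ Set.EqOn (g ∘ α) f (closedBall G v 2) := by
  obtain ⟨h, hh, hhv, hgh⟩ := hf.lift hg hv
  obtain ⟨α, hα⟩ := hρ.exists_iso_eqOn v h hh
  refine ⟨α, (hα mem_closedBall_self).trans hhv, fun u hu => ?_⟩
  rw [Function.comp_apply, hα hu]
  exact hgh (closedBall_subset_closedBall hρ.two_le hu)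

theorem eqOn_closedBall_two (hρ : IsRigidityRadius G ρ) (hf : IsLocalIso G H ρ v f)
    (hg : IsLocalIso G H ρ v g) (h : Set.EqOn f g (closedBall G v 1)) :
    Set.EqOn f g (closedBall G v 2) := by
  obtain ⟨α, hαv, hα⟩ := hρ.exists_iso_of_apply_eq hf hg (h mem_closedBall_self)
  have hρ1 : 1 ≤ ρ := one_le_two.trans hρ.two_le
  have hfix : ∀ x, α x = x := by
    refine hρ.apply_eq_self α v hαv fun w hw => ?_
    have hαw : α w ∈ closedBall G v ρ := by
      have hadj := α.map_adj_iff.mpr hw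
      rw [hαv] at hadj
      exact mem_closedBall_of_adj hadj hρ1
    refine hg.injOn hαw (mem_closedBall_of_adj hw hρ1) ?_
    exact (hα (mem_closedBall_of_adj hw one_le_two)).trans (h (mem_closedBall_of_adj hw le_rfl))
  intro u hu
  rw [← hα hu, Function.comp_apply, hfix]

theorem exists_extension (hρ : IsRigidityRadius G ρ) (hr : ρ ≤ r)
    (hH : IsLocallyModelledOn H G r) (hf : IsLocalIso G H ρ v f) :
    ∃ f', IsLocalIso G H r v f' ∧ Set.EqOn f' f (closedBall G v 2) := by
  obtain ⟨g, hg, hgv⟩ := hH v (f v)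
  obtain ⟨α, hαv, hα⟩ := hρ.exists_iso_of_apply_eq hf (hg.mono hr) hgv.symm
  exact ⟨g ∘ α, IsLocalIso.comp_iso α (by rwa [hαv]), hα⟩

end IsRigidityRadius

end Rigidity

/-- A developing map of `G` into `H`: a global map which agrees near every vertex with a local
isomorphism of radius `ρ`. -/
def IsDevelopingMap {V W : Type*} (G : SimpleGraph V) (H : SimpleGraph W) (ρ : ℕ) (c : V → W) :
    Prop :=
  ∀ v, ∃ f, IsLocalIso G H ρ v f ∧ Set.EqOn c f (closedBall G v 2)

namespace IsDevelopingMap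

variable {V W : Type*} {G : SimpleGraph V} {H : SimpleGraph W} {c c' : V → W} {v v₁ v₂ : V} {ρ : ℕ}

theorem isLocalIso (hc : IsDevelopingMap G H ρ c) (hρ : 2 ≤ ρ) (v : V) : IsLocalIso G H 2 v c := by
  obtain ⟨f, hf, hcf⟩ := hc v
  exact (hf.mono hρ).congr hcf

theorem comp_iso (hc : IsDevelopingMap G H ρ c) (α : G ≃g G) : IsDevelopingMap G H ρ (c ∘ α) := by
  intro v
  obtain ⟨f, hf, hcf⟩ := hc (α v)
  exact ⟨f ∘ α, hf.comp_iso α, fun u hu => hcf ((apply_mem_closedBall α).mpr hu)⟩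

theorem isCover (hc : IsDevelopingMap G H ρ c) (hρ : 2 ≤ ρ) : IsCover G H c := by
  have hadj : ∀ ⦃u v : V⦄, G.Adj u v → H.Adj (c u) (c v) := fun u v huv =>
    ((hc.isLocalIso hρ u).adj_iff u mem_closedBall_self v
      (mem_closedBall_of_adj huv one_le_two)).mp huv
  refine ⟨hadj, fun v => ⟨fun w hw => hadj hw, fun a ha b hb hab => ?_, fun y hy => ?_⟩⟩
  · exact (hc.isLocalIso hρ v).injOn (mem_closedBall_of_adj ha one_le_two)
      (mem_closedBall_of_adj hb one_le_two) hab
  · obtain ⟨w, hw, rfl⟩ := (hc.isLocalIso hρ v).image_eq.ge (mem_closedBall_of_adj hy one_le_two)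
    exact ⟨w, ((hc.isLocalIso hρ v).adj_iff v mem_closedBall_self w hw).mpr hy, rfl⟩

theorem eq_of_eqOn (hc : IsDevelopingMap G H ρ c) (hc' : IsDevelopingMap G H ρ c')
    (hρ : IsRigidityRadius G ρ) (hG : G.Preconnected) (h : Set.EqOn c c' (closedBall G v 1)) :
    c = c' := by
  have hsub := (preconnectedOn_univ.mpr hG).subset_of_adj_closed
    (T := {v | Set.EqOn c c' (closedBall G v 1)}) (Set.mem_univ v) h ?_
  · exact funext fun x => hsub (Set.mem_univ x) mem_closedBall_self
  · intro a ha _ b _ hab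
    obtain ⟨f, hf, hcf⟩ := hc a
    obtain ⟨f', hf', hcf'⟩ := hc' a
    have hsub : closedBall G a 1 ⊆ closedBall G a 2 := closedBall_subset_closedBall one_le_two
    have hff' : Set.EqOn f f' (closedBall G a 2) := hρ.eqOn_closedBall_two hf hf'
      (((hcf.mono hsub).symm.trans ha).trans (hcf'.mono hsub))
    exact ((hcf.trans hff').trans hcf'.symm).mono
      (closedBall_subset_of_mem (mem_closedBall_of_adj hab le_rfl) le_rfl)

theorem exists_iso_of_apply_eq (hc : IsDevelopingMap G H ρ c) (hρ : IsRigidityRadius G ρ)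
    (hG : G.Preconnected) (h : c v₁ = c v₂) : ∃ α : G ≃g G, α v₁ = v₂ ∧ ∀ x, c (α x) = c x := by
  obtain ⟨f₁, hf₁, hcf₁⟩ := hc v₁
  obtain ⟨f₂, hf₂, hcf₂⟩ := hc v₂
  obtain ⟨α, hαv, hα⟩ := hρ.exists_iso_of_apply_eq hf₁ hf₂
    (by rw [← hcf₁ mem_closedBall_self, h, hcf₂ mem_closedBall_self])
  refine ⟨α, hαv, congrFun ((hc.comp_iso α).eq_of_eqOn hc hρ hG (v := v₁) fun u hu => ?_)⟩
  have hu₂ : u ∈ closedBall G v₁ 2 := closedBall_subset_closedBall one_le_two hu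
  have hαu : α u ∈ closedBall G v₂ 2 := hαv ▸ (apply_mem_closedBall α).mpr hu₂
  exact (hcf₂ hαu).trans ((hα hu₂).trans (hcf₁ hu₂).symm)

theorem of_eqOn {φ : V → V → W} (hφ : ∀ v, IsLocalIso G H ρ v (φ v))
    (h : ∀ ⦃u v⦄, G.Adj u v → Set.EqOn (φ u) (φ v) (closedBall G v 1)) :
    IsDevelopingMap G H ρ fun v => φ v v := by
  have hone : ∀ u v, v ∈ closedBall G u 1 → φ v v = φ u v := by
    intro u v hv
    rcases mem_closedBall_one.mp hv with rfl | huv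
    · rfl
    · exact (h huv mem_closedBall_self).symm
  refine fun v => ⟨φ v, hφ v, fun w hw => ?_⟩
  rcases mem_closedBall_succ.mp hw with hw | ⟨y, hy, hyw⟩
  · exact hone v w hw
  refine (hone y w (mem_closedBall_of_adj hyw le_rfl)).trans ?_
  rcases mem_closedBall_one.mp hy with rfl | hvy
  · rfl
  · exact (h hvy (mem_closedBall_of_adj hyw le_rfl)).symm

end IsDevelopingMap

/-- Germs at `v` of local isomorphisms of radius `r` from `G` to `H`. A germ is encoded as the
restriction to the ball of radius `1`, which determines it further out by rigidity. -/
def Germ {V W : Type*} (G : SimpleGraph V) (H : SimpleGraph W) (r : ℕ) (v : V) : Type _ :=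
  {s : closedBall G v 1 → W // ∃ f, IsLocalIso G H r v f ∧ (closedBall G v 1).domRestrict f = s}

namespace Germ

variable {V W : Type*} {G : SimpleGraph V} {H : SimpleGraph W} {f g : V → W} {u v : V} {ρ ℓ r : ℕ}

/-- The germ `s` at `v` is the germ of `f`. -/
def IsGermOf (s : Germ G H r v) (f : V → W) : Prop :=
  (closedBall G v 1).domRestrict f = s.1

theorem exists_isGermOf (s : Germ G H r v) : ∃ f, IsLocalIso G H r v f ∧ s.IsGermOf f := s.2

theorem exists_isGermOf_of_isLocalIso (hf : IsLocalIso G H r v f) :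
    ∃ s : Germ G H r v, s.IsGermOf f := ⟨⟨_, f, hf, rfl⟩, rfl⟩

theorem IsGermOf.unique {s t : Germ G H r v} (hs : s.IsGermOf f) (ht : t.IsGermOf f) : s = t :=
  Subtype.ext (hs.symm.trans ht)

theorem IsGermOf.eqOn {s : Germ G H r v} (hf : s.IsGermOf f) (hg : s.IsGermOf g) :
    Set.EqOn f g (closedBall G v 1) :=
  Set.domRestrict_eq_domRestrict_iff.mp (hf.trans hg.symm)

theorem IsGermOf.congr {s : Germ G H r v} (hf : s.IsGermOf f)
    (h : Set.EqOn f g (closedBall G v 1)) : s.IsGermOf g :=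
  (Set.domRestrict_eq_domRestrict_iff.mpr h.symm).trans hf

theorem exists_continuation (hρ : IsRigidityRadius G ρ) (hr : ρ + 1 ≤ r)
    (hH : IsLocallyModelledOn H G r) (huv : G.Adj u v) (s : Germ G H r u) :
    ∃ t : Germ G H r v, ∀ f, IsLocalIso G H ρ u f → s.IsGermOf f → t.IsGermOf f := by
  have hv := mem_closedBall_of_adj huv le_rfl
  obtain ⟨f₀, hf₀, hs₀⟩ := s.exists_isGermOf
  obtain ⟨f', hf', hff'⟩ := hρ.exists_extension (Nat.le_of_succ_le hr) hH
    (hf₀.shrink hv (k := ρ) (by lia))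
  obtain ⟨t, ht⟩ := exists_isGermOf_of_isLocalIso hf'
  refine ⟨t, fun f hf hs => ht.congr fun z hz => ?_⟩
  rw [hff' (closedBall_subset_closedBall one_le_two hz)]
  exact hρ.eqOn_closedBall_two (hf₀.mono (by lia)) hf (hs₀.eqOn hs)
    (mem_closedBall_trans hv hz le_rfl)

/-- Analytic continuation of germs along the edges of `G`. -/
noncomputable def localSystem (hρ : IsRigidityRadius G ρ) (hr : ρ + 1 ≤ r)
    (hH : IsLocallyModelledOn H G r) : LocalSystem G (Germ G H r) where
  map h s := (exists_continuation hρ hr hH h s).choose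
  map_symm_map h s := by
    obtain ⟨f, hf, hs⟩ := s.exists_isGermOf
    have ht := (exists_continuation hρ hr hH h s).choose_spec f (hf.mono (by lia)) hs
    have hf' := hf.shrink (mem_closedBall_of_adj h le_rfl) (k := ρ) (by lia)
    exact ((exists_continuation hρ hr hH h.symm _).choose_spec f hf' ht).unique hs

theorem IsGermOf.map (hρ : IsRigidityRadius G ρ) (hr : ρ + 1 ≤ r)
    (hH : IsLocallyModelledOn H G r) (h : G.Adj u v) {s : Germ G H r u} (hs : s.IsGermOf f)
    (hf : IsLocalIso G H ρ u f) : ((localSystem hρ hr hH).map h s).IsGermOf f :=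
  (exists_continuation hρ hr hH h s).choose_spec f hf hs

theorem IsGermOf.transport (hρ : IsRigidityRadius G ρ) (hr : ρ + 1 ≤ r)
    (hH : IsLocallyModelledOn H G r) (p : G.Walk u v) {s : Germ G H r u} (hs : s.IsGermOf f)
    (hf : ∀ z ∈ p.support, IsLocalIso G H ρ z f) :
    ((localSystem hρ hr hH).transport p s).IsGermOf f := by
  induction p with
  | nil => exact hs
  | cons h p ih =>
    rw [Walk.support_cons, List.forall_mem_cons] at hf
    exact ih (hs.map hρ hr hH h hf.1) hf.2

-- A short cycle stays inside the ball on which a representative of the germ is defined.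
theorem transport_eq_id (hρ : IsRigidityRadius G ρ) (hr : ρ + 1 ≤ r)
    (hH : IsLocallyModelledOn H G r) {c : G.Walk v v} (hc : ρ + c.length ≤ r) :
    (localSystem hρ hr hH).transport c = id := by
  ext1 s
  obtain ⟨f, hf, hs⟩ := s.exists_isGermOf
  exact (hs.transport hρ hr hH c fun z hz =>
    hf.shrink (support_subset_closedBall c le_rfl z hz) (by lia)).unique hs

end Germ

section Development

variable {V W : Type*} {G : SimpleGraph V} {H : SimpleGraph W} {ρ ℓ : ℕ}

theorem exists_isDevelopingMap [G.LocallyFinite] [Nonempty W] (hG : ThreeConnected G)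
    (hone : OneEnded G) (hρ : IsRigidityRadius G ρ) (hℓ : ∀ X, IsPeripheralSet G X → X.ncard ≤ ℓ)
    (hH : IsLocallyModelledOn H G (ρ + ℓ + 1)) : ∃ c, IsDevelopingMap G H ρ c := by
  let L := Germ.localSystem hρ (by lia) hH
  have hper : ∀ v (c : G.Walk v v), IsPeripheral G c → L.transport c = id := by
    intro v c hc
    have hlen : c.length ≤ ℓ := ncard_support_of_isCycle hc.1 ▸ hℓ _ ⟨v, c, hc, rfl⟩
    exact Germ.transport_eq_id hρ _ hH (by lia)
  obtain ⟨o, -⟩ := (hG.2 ∅ Set.finite_empty (by simp)).nonempty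
  obtain ⟨f, hf, -⟩ := hH o (Classical.arbitrary W)
  obtain ⟨s, -⟩ := Germ.exists_isGermOf_of_isLocalIso hf
  obtain ⟨F, hF⟩ :=
    (LocalSystem.isFlatOn_univ_of_isPeripheral hone hG hper).exists_section hG.preconnected s
  choose φ hφ hφF using fun v => (F v).exists_isGermOf
  have hφρ : ∀ v, IsLocalIso G H ρ v (φ v) := fun v => (hφ v).mono (by lia)
  refine ⟨_, IsDevelopingMap.of_eqOn hφρ fun u v huv => ?_⟩
  have huv' := (hφF u).map hρ (by lia) hH huv (hφρ u)
  exact (hF huv ▸ huv').eqOn (hφF v)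

end Development

/-- Main theorem: if `G` is a vertex-transitive, planar, 1-ended, locally finite graph,
then there is `r : ℕ` such that `G` covers (normally) every nonempty graph `H` all of whose
balls of radius `r` are isomorphic to the ball of radius `r` in `G`. -/
theorem vertexTransitive_planar_oneEnded_covers_locally_G_graphs
    {V : Type u} (G : SimpleGraph V) [G.LocallyFinite]
    (hpl : Nonempty (PlanarEmbedding G))
    (htrans : ∀ u v : V, ∃ α : G ≃g G, α u = v)
    (hone : OneEnded G) (o : V) :
    ∃ r : ℕ, ∀ (W : Type w) (H : SimpleGraph W), Nonempty W →
      (∀ x : W, Nonempty ((H.induce {u | H.dist x u ≤ r}) ≃g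
        (G.induce {u | G.dist o u ≤ r}))) →
      ∃ c : V → W, IsCover G H c ∧
        ∀ v₁ v₂ : V, c v₁ = c v₂ →
          ∃ α : G ≃g G, α v₁ = v₂ ∧ ∀ x : V, c (α x) = c x := by
  obtain ⟨emb⟩ := hpl
  have htrans : VertexTransitive G := htrans
  have hconn := htrans.preconnected hone
  have h3 := htrans.threeConnected hone
  obtain ⟨ρ, hρ⟩ := htrans.exists_isRigidityRadius hone emb.angleSystem
  obtain ⟨ℓ, hℓ⟩ := h3.exists_ncard_le emb.angleSystem htrans
  refine ⟨ρ + ℓ + 1, fun W H _ hH => ?_⟩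
  have hmodel : IsLocallyModelledOn H G (ρ + ℓ + 1) :=
    fun v x => htrans.exists_isLocalIso hconn (hH x) v
  obtain ⟨c, hc⟩ := exists_isDevelopingMap h3 hone hρ hℓ hmodel
  exact ⟨c, hc.isCover hρ.two_le, fun _ _ => hc.exists_iso_of_apply_eq hρ hconn⟩
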